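/- arXiv:2011.05006 — 3 statements merged into one kernel-verified Lean document; each statement's English description precedes it below -/
import Mathlib

section
/- For all real numbers q̃, t, z with 0 < q̃ < 1, t ≥ 1 and z > 0, one has 2·S_even(q̃,t)·Σ_{ℓ∈ℤ} q̃^{ℓ(ℓ+1)} z^{2ℓ} = Π_{i≥1} (1 + t·z·q̃^i + z²·q̃^{2i})·(1 + t·z⁻¹·q̃^{i−1} + z⁻²·q̃^{2(i−1)}) + Π_{i≥1} (1 − t·z·q̃^i + z²·q̃^{2i})·(1 − t·z⁻¹·q̃^{i−1} + z⁻²·q̃^{2(i−1)}), where the sum over ℓ and the infinite products converge absolutely. -/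
/-!
Place particles on `ℤ`, at most two per site, all sites full far to the left and empty far to the
right. Let `t` count the singly occupied sites, `z` the charge and `q` the energy, the latter two
relative to the vacuum in which exactly the sites `s ≤ 0` are full. Counted site by site, the
generating function is a product over `ℤ`, and pairing the sites `i + 1` and `-i` gives the `i`-th
factor of the theorem; replacing `z` by `-z` changes the sign of the configurations of odd charge,
so the sum of the two products is twice the sum over the configurations of even charge.

Counted particle by particle, such a configuration is its weakly decreasing sequence of positions
`x 0 ≥ x 1 ≥ …`, hence is determined by the gaps `ω n = x n - x (n + 1)` and a global shift. That
no site holds three particles says that no two consecutive gaps vanish, and even charge `2 * l` says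
that far out the positions are `l, l, l - 1, l - 1, …`, so that `ω ∈ He`. Summation by parts turns
the energy into `l * (l + 1) + Afun ω`; a vanishing gap is a doubly occupied site, which turns the
number of singly occupied sites into `Bfun ω`. The sum over pairs `(l, ω)` therefore factorizes.
-/

open scoped BigOperators

/-- `He` is the set of sequences `(ω_{-i})_{i ≥ 1}` of non-negative integers (indexed here by
`n : ℕ` with `i = n + 1`) with no two consecutive vanishing entries, agreeing for large `i`
with the sequence which is `1` at even `i` and `0` at odd `i`. -/
def He : Set (ℕ → ℕ) :=
  {ω | (∀ n : ℕ, ¬(ω n = 0 ∧ ω (n + 1) = 0)) ∧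
       (∃ N : ℕ, ∀ n ≥ N, ω n = if (n + 1) % 2 = 0 then 1 else 0)}

/-- `Ho` is as `He`, but agreeing for large `i` with the sequence which is `1` at odd `i`
and `0` at even `i`. -/
def Ho : Set (ℕ → ℕ) :=
  {ω | (∀ n : ℕ, ¬(ω n = 0 ∧ ω (n + 1) = 0)) ∧
       (∃ N : ℕ, ∀ n ≥ N, ω n = if (n + 1) % 2 = 1 then 1 else 0)}

/-- `A(ω) = Σ_{i odd} i·ω_{-i} + Σ_{i even} i·(ω_{-i} − 1)`. -/
noncomputable def Afun (ω : ℕ → ℕ) : ℤ :=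
  ∑ᶠ n : ℕ, (if (n + 1) % 2 = 1 then ((n : ℤ) + 1) * (ω n : ℤ)
             else ((n : ℤ) + 1) * ((ω n : ℤ) - 1))

/-- `B(ω) = 2·(Σ_{i odd} 1{ω_{-i} ≥ 1} − Σ_{i even} 1{ω_{-i} = 0})`. -/
noncomputable def Bfun (ω : ℕ → ℕ) : ℤ :=
  2 * ((∑ᶠ n : ℕ, if (n + 1) % 2 = 1 ∧ 1 ≤ ω n then (1 : ℤ) else 0)
     - (∑ᶠ n : ℕ, if (n + 1) % 2 = 0 ∧ ω n = 0 then (1 : ℤ) else 0))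

/-- `A'(ω) = Σ_{i even} i·ω_{-i} + Σ_{i odd} i·(ω_{-i} − 1)`. -/
noncomputable def A'fun (ω : ℕ → ℕ) : ℤ :=
  ∑ᶠ n : ℕ, (if (n + 1) % 2 = 0 then ((n : ℤ) + 1) * (ω n : ℤ)
             else ((n : ℤ) + 1) * ((ω n : ℤ) - 1))

/-- `B'(ω) = 2·(Σ_{i even} 1{ω_{-i} ≥ 1} − Σ_{i odd} 1{ω_{-i} = 0})`. -/
noncomputable def B'fun (ω : ℕ → ℕ) : ℤ :=
  2 * ((∑ᶠ n : ℕ, if (n + 1) % 2 = 0 ∧ 1 ≤ ω n then (1 : ℤ) else 0)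
     - (∑ᶠ n : ℕ, if (n + 1) % 2 = 1 ∧ ω n = 0 then (1 : ℤ) else 0))

/-- `S_even(q̃, t) = Σ_{ω ∈ H_e} q̃^{A(ω)} t^{B(ω)}`. -/
noncomputable def Seven (q t : ℝ) : ℝ := ∑' ω : He, q ^ Afun ω.1 * t ^ Bfun ω.1

/-- `S_odd(q̃, t) = Σ_{ω ∈ H_o} q̃^{A'(ω)} t^{B'(ω)}`. -/
noncomputable def Sodd (q t : ℝ) : ℝ := ∑' ω : Ho, q ^ A'fun ω.1 * t ^ B'fun ω.1

open Filter Finset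

section InfiniteDistributivity

variable {ι κ R : Type*} [Zero κ]

lemma sum_finsupp_prod_eq_prod_sum [Fintype κ] [CommSemiring R] {f : ι → κ → R}
    (h0 : ∀ i, f i 0 = 1) (s : Finset ι) :
    ∑ δ ∈ s.finsupp fun _ => univ, δ.prod f = ∏ i ∈ s, ∑ k, f i k := by
  classical
  rw [Finset.prod_sum, Finset.finsupp, sum_map]
  refine sum_congr (by congr!) fun p _ => ?_
  rw [Function.Embedding.coeFn_mk,
    Finsupp.prod_of_support_subset _ (Finsupp.support_indicator_subset s p) f fun i _ => h0 i,
    ← prod_attach]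
  simp

lemma tendsto_finsupp_univ_atTop [Fintype κ] :
    Tendsto (fun s : Finset ι => s.finsupp fun _ => (univ : Finset κ)) atTop atTop := by
  refine tendsto_atTop_finset_of_monotone (fun s s' h δ hδ => ?_) fun δ => ⟨δ.support, ?_⟩
  · rw [mem_finsupp_iff] at hδ ⊢
    exact ⟨hδ.1.trans h, fun i _ => mem_univ _⟩
  · exact mem_finsupp_iff.2 ⟨subset_rfl, fun i _ => mem_univ _⟩

variable [NormedCommRing R] [NormOneClass R] {f : ι → κ → R}

lemma summable_norm_finsupp_prod [Finite κ] (h0 : ∀ i, f i 0 = 1)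
    (hf : ∀ k, k ≠ 0 → Summable fun i => ‖f i k‖) :
    Summable fun δ : ι →₀ κ => ‖δ.prod f‖ := by
  classical
  have := Fintype.ofFinite κ
  have htail : Summable fun i => ∑ k ∈ univ.erase 0, ‖f i k‖ :=
    summable_sum fun k hk => hf k (ne_of_mem_erase hk)
  refine summable_of_sum_le (c := Real.exp (∑' i, ∑ k ∈ univ.erase 0, ‖f i k‖))
    (fun δ => norm_nonneg _) fun u => ?_
  obtain ⟨s, hs⟩ := (tendsto_finsupp_univ_atTop.eventually (eventually_ge_atTop u)).exists
  calc ∑ δ ∈ u, ‖δ.prod f‖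
      ≤ ∑ δ ∈ s.finsupp fun _ => univ, ‖δ.prod f‖ :=
        sum_le_sum_of_subset_of_nonneg hs fun δ _ _ => norm_nonneg _
    _ ≤ ∑ δ ∈ s.finsupp fun _ => univ, δ.prod fun i k => ‖f i k‖ :=
        sum_le_sum fun δ _ => Finset.norm_prod_le _ _
    _ = ∏ i ∈ s, (1 + ∑ k ∈ univ.erase 0, ‖f i k‖) := by
        rw [sum_finsupp_prod_eq_prod_sum fun i => by rw [h0, norm_one]]
        refine prod_congr rfl fun i _ => ?_
        rw [← add_sum_erase _ _ (mem_univ (0 : κ)), h0, norm_one]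
    _ ≤ Real.exp (∑ i ∈ s, ∑ k ∈ univ.erase 0, ‖f i k‖) :=
        Real.prod_one_add_le_exp_sum s fun i => by positivity
    _ ≤ Real.exp (∑' i, ∑ k ∈ univ.erase 0, ‖f i k‖) :=
        Real.exp_le_exp.2 (htail.sum_le_tsum s fun i _ => by positivity)

theorem hasProd_sum_tsum_finsupp_prod [Fintype κ] [CompleteSpace R] (h0 : ∀ i, f i 0 = 1)
    (hf : ∀ k, k ≠ 0 → Summable fun i => ‖f i k‖) :
    HasProd (fun i => ∑ k, f i k) (∑' δ : ι →₀ κ, δ.prod f) := by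
  have hsum := (summable_norm_finsupp_prod h0 hf).of_norm.hasSum
  simp only [HasSum, HasProd, SummationFilter.unconditional_filter] at hsum ⊢
  exact (hsum.comp tendsto_finsupp_univ_atTop).congr (sum_finsupp_prod_eq_prod_sum h0)

end InfiniteDistributivity

section Sequences

lemma exists_seq_with_gaps_eventuallyEq {M : Type*} [AddCommGroup M] {d y : ℕ → M}
    (h : ∀ᶠ n in atTop, y n = y (n + 1) + d n) :
    ∃ x : ℕ → M, (∀ n, x n = x (n + 1) + d n) ∧ x =ᶠ[atTop] y := by
  obtain ⟨N, hN⟩ := eventually_atTop.1 h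
  refine ⟨fun n => y N + ∑ m ∈ range N, d m - ∑ m ∈ range n, d m, fun n => ?_,
    eventually_atTop.2 ⟨N, fun n hn => ?_⟩⟩
  · simp only [sum_range_succ]; abel
  · induction n, hn using Nat.le_induction with
    | base => simp
    | succ n hn ih =>
      rw [← add_left_inj (d n), ← hN n hn, ← ih]
      simp only [sum_range_succ]; abel

lemma seq_eq_of_gaps_eq_of_eventuallyEq {M : Type*} [AddGroup M] {d x x' : ℕ → M}
    (h : ∀ n, x n = x (n + 1) + d n) (h' : ∀ n, x' n = x' (n + 1) + d n)
    (hxx' : x =ᶠ[atTop] x') : x = x' := by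
  have hconst : ∀ n, x n - x' n = x 0 - x' 0 := fun n => by
    induction n with
    | zero => rfl
    | succ n ih => rw [← ih, h n, h' n, add_sub_add_right_eq_sub]
  obtain ⟨N, hN⟩ := hxx'.exists
  funext n
  rw [← sub_eq_zero, hconst, ← hconst N, hN, sub_self]

lemma finsum_eventually_eq_sum_range {M : Type*} [AddCommMonoid M] {f : ℕ → M}
    (h : ∀ᶠ n in atTop, f n = 0) : ∀ᶠ N in atTop, ∑ᶠ n, f n = ∑ n ∈ range N, f n := by
  obtain ⟨N₀, hN₀⟩ := eventually_atTop.1 h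
  filter_upwards [eventually_ge_atTop N₀] with N hN
  refine finsum_eq_sum_of_support_subset f fun n hn => ?_
  by_contra hnN
  exact hn (hN₀ n (hN.trans (by simpa using hnN)))

end Sequences

section Enumerations

/-- The sequence `x` lists, in weakly decreasing order, the multiset in which `s` has multiplicity
`o s`: the indices `n` with `x n = s` form a block of `o s` consecutive integers. -/
structure Enumerates {α : Type*} [Preorder α] (x : ℕ → α) (o : α → ℕ) : Prop where
  antitone : Antitone x
  fiber : ∀ s, ∃ k, ∀ n, x n = s ↔ k ≤ n ∧ n < k + o s

/-- With `J s` the number of elements to be listed strictly to the right of `s`, the `n`-th one is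
the least `s` with `J s ≤ n`. -/
lemma exists_enumerates {o : ℤ → ℕ} (hright : ∀ᶠ s in atTop, o s = 0)
    (hleft : ∀ᶠ s in atBot, o s ≠ 0) : ∃ x, Enumerates x o := by
  obtain ⟨b, hb⟩ := eventually_atTop.1 hright
  obtain ⟨a, ha⟩ := eventually_atBot.1 hleft
  let J : ℤ → ℕ := fun s => ∑ i ∈ Ioc s b, o i
  have hJ_sub_one : ∀ s, J (s - 1) = J s + o s := fun s => by
    rcases le_or_gt s b with hs | hs
    · have : Ioc (s - 1) b = insert s (Ioc s b) := by ext i; simp; omega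
      simp only [J, this]
      rw [sum_insert (by simp), add_comm]
    · simp [J, hb s hs.le, Ioc_eq_empty_of_le hs.le, Ioc_eq_empty_of_le (show b ≤ s - 1 by omega)]
  have hJ_anti : Antitone J := antitone_int_of_succ_le fun s => by
    have := hJ_sub_one (s + 1); rw [add_sub_cancel_right] at this; omega
  have hJ_large : ∀ s ≤ a, a - s ≤ J s := fun s hs => by
    induction s, hs using Int.leInductionDown with
    | base => simp
    | pred s hs ih => have := hJ_sub_one s; have := ha s hs; omega
  have hleast : ∀ n : ℕ, ∃ s, J s ≤ n ∧ ∀ s', J s' ≤ n → s ≤ s' := fun n => by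
    refine Int.exists_least_of_bdd ⟨a - n, fun s hs => ?_⟩ ⟨b, by simp [J]⟩
    by_contra hlt
    have := hJ_large s (by omega)
    omega
  choose x hx_le hx_least using hleast
  have hgalois : ∀ n s, x n ≤ s ↔ J s ≤ n := fun n s =>
    ⟨fun h => (hJ_anti h).trans (hx_le n), hx_least n s⟩
  refine ⟨x, fun m n hmn => (hgalois _ _).2 ((hx_le m).trans hmn), fun s => ⟨J s, fun n => ?_⟩⟩
  have h_le := hgalois n s
  have h_le_pred := hgalois n (s - 1)
  have := hJ_sub_one s
  omega

lemma exists_enumerates_of_add_two_lt {α : Type*} [Preorder α] {x : ℕ → α} (hx : Antitone x)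
    (hx_two : ∀ n, x (n + 2) < x n) : ∃ o : α → Fin 3, Enumerates x fun s => o s := by
  have hblock : ∀ s, ∃ k, ∃ c : Fin 3, ∀ n, x n = s ↔ k ≤ n ∧ n < k + c := fun s => by
    by_cases hs : ∃ n, x n = s
    · classical
      let k := Nat.find hs
      have hk : x k = s := Nat.find_spec hs
      have hk_le : ∀ n, x n = s → k ≤ n := fun n => Nat.find_min' hs
      have hlt : ∀ n, k + 2 ≤ n → x n < s := fun n hn => (hx hn).trans_lt (hk ▸ hx_two k)
      have hcases : ∀ n, k ≤ n → n = k ∨ n = k + 1 ∨ k + 2 ≤ n := by omega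
      by_cases hk_succ : x (k + 1) = s
      · refine ⟨k, 2, fun n => ⟨fun hn => ⟨hk_le n hn, ?_⟩, fun ⟨hkn, hn⟩ => ?_⟩⟩
        · by_contra! hn'
          exact (hlt n hn').ne hn
        · rcases hcases n hkn with rfl | rfl | h
          exacts [hk, hk_succ, absurd hn h.not_gt]
      · refine ⟨k, 1, fun n => ⟨fun hn => ⟨hk_le n hn, ?_⟩, fun ⟨hkn, hn⟩ => ?_⟩⟩
        · rcases hcases n (hk_le n hn) with rfl | rfl | h
          exacts [Nat.lt_succ_self _, absurd hn hk_succ, absurd hn (hlt n h).ne]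
        · exact (Nat.le_antisymm (Nat.lt_succ_iff.1 hn) hkn) ▸ hk
    · exact ⟨0, 0, fun n => ⟨fun h => absurd ⟨n, h⟩ hs, fun h => absurd h.2 (by simp)⟩⟩
  choose k o ho using hblock
  exact ⟨o, hx, fun s => ⟨k s, ho s⟩⟩

namespace Enumerates

variable {α : Type*}

lemma add_two_lt [PartialOrder α] {x : ℕ → α} {o : α → ℕ} (h : Enumerates x o)
    (ho : ∀ s, o s ≤ 2) (n : ℕ) : x (n + 2) < x n := by
  refine (h.antitone (by omega)).lt_of_ne fun heq => ?_
  obtain ⟨k, hk⟩ := h.fiber (x n)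
  have := (hk n).1 rfl
  have := (hk (n + 2)).1 heq
  have := ho (x n)
  omega

lemma multiplicity_unique [Preorder α] {o o' : α → ℕ} {x : ℕ → α} (h : Enumerates x o)
    (h' : Enumerates x o') : o = o' := by
  funext s
  obtain ⟨k, hk⟩ := h.fiber s
  obtain ⟨k', hk'⟩ := h'.fiber s
  have hIco : Ico k (k + o s) = Ico k' (k' + o' s) := by
    ext n; rw [mem_Ico, mem_Ico, ← hk, ← hk']
  simpa using congrArg card hIco

variable [LinearOrder α] {o : α → ℕ} {x x' : ℕ → α}

/-- The fibres over `x' n` agree below `n`, but only the one of `x'` reaches `n`, although both have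
the same length. -/
lemma not_lt_of_forall_lt_eq (hx : Enumerates x o) (hx' : Enumerates x' o) {n : ℕ}
    (h : ∀ m < n, x m = x' m) : ¬ x n < x' n := by
  intro hlt
  obtain ⟨k, hk⟩ := hx.fiber (x' n)
  obtain ⟨k', hk'⟩ := hx'.fiber (x' n)
  have hbelow : ∀ m, k ≤ m ∧ m < k + o (x' n) → m < n := fun m hm => by
    by_contra! hnm
    exact (hx.antitone hnm).not_gt ((hk m).2 hm ▸ hlt)
  have hagree : ∀ m < n, (k ≤ m ∧ m < k + o (x' n)) ↔ (k' ≤ m ∧ m < k' + o (x' n)) :=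
    fun m hm => by rw [← hk, ← hk', h m hm]
  have := (hk' n).1 rfl
  have := hbelow k
  have := hbelow (k + o (x' n) - 1)
  have := hagree k
  have := hagree k'
  have := hagree (k + o (x' n) - 1)
  omega

lemma sequence_unique (hx : Enumerates x o) (hx' : Enumerates x' o) : x = x' := by
  funext n
  induction n using Nat.strong_induction_on with
  | _ n ih =>
    exact le_antisymm
      (not_lt.1 (hx'.not_lt_of_forall_lt_eq hx fun m hm => (ih m hm).symm))
      (not_lt.1 (hx.not_lt_of_forall_lt_eq hx' ih))

variable [LocallyFiniteOrder α]

lemma exists_le (h : Enumerates x o) (a : α) : ∃ n, x n ≤ a := by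
  by_contra! hlt
  have hfin : (x ⁻¹' Set.Ioc a (x 0)).Finite :=
    (Set.finite_Ioc a (x 0)).preimage' fun s _ => by
      obtain ⟨k, hk⟩ := h.fiber s
      exact (Set.finite_Ico k (k + o s)).subset fun n hn => (hk n).1 hn
  exact Set.infinite_univ (hfin.subset fun n _ => ⟨hlt n, h.antitone (Nat.zero_le n)⟩)

lemma exists_lt_iff (h : Enumerates x o) (a : α) : ∃ M, ∀ n, n < M ↔ a < x n := by
  classical
  refine ⟨Nat.find (h.exists_le a), fun n => ⟨fun hn => ?_, fun hn => ?_⟩⟩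
  · exact not_le.1 (Nat.find_min _ hn)
  · by_contra! hle
    exact hn.not_ge ((h.antitone hle).trans (Nat.find_spec (h.exists_le a)))

lemma sum_range_eq_sum_sum {β : Type*} [AddCommMonoid β] (h : Enumerates x o) {k : α → ℕ}
    (hk : ∀ s n, x n = s ↔ k s ≤ n ∧ n < k s + o s) {M : ℕ} {a b : α}
    (hM : ∀ n, n < M ↔ a < x n) (hb : x 0 ≤ b) (g : ℕ → β) :
    ∑ n ∈ range M, g n = ∑ s ∈ Ioc a b, ∑ n ∈ Ico (k s) (k s + o s), g n := by
  have hmaps : ∀ n ∈ range M, x n ∈ Ioc a b := fun n hn =>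
    mem_Ioc.2 ⟨(hM n).1 (mem_range.1 hn), (h.antitone (Nat.zero_le n)).trans hb⟩
  rw [← sum_fiberwise_of_maps_to hmaps]
  refine sum_congr rfl fun s hs => sum_congr ?_ fun _ _ => rfl
  ext n
  rw [mem_filter, mem_range, hM, mem_Ico, ← hk]
  exact ⟨And.right, fun hn => ⟨hn ▸ (mem_Ioc.1 hs).1, hn⟩⟩

lemma sum_range_comp {β : Type*} [AddCommMonoid β] (h : Enumerates x o) {M : ℕ} {a b : α}
    (hM : ∀ n, n < M ↔ a < x n) (hb : x 0 ≤ b) (f : α → β) :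
    ∑ n ∈ range M, f (x n) = ∑ s ∈ Ioc a b, o s • f s := by
  choose k hk using h.fiber
  rw [h.sum_range_eq_sum_sum hk hM hb]
  refine sum_congr rfl fun s _ => ?_
  rw [sum_congr rfl fun n hn => by rw [(hk s n).2 (mem_Ico.1 hn)]]
  simp

lemma card_repetitions (h : Enumerates x o) {M : ℕ} {a b : α} (hM : ∀ n, n < M ↔ a < x n)
    (hb : x 0 ≤ b) : #{n ∈ range M | x (n + 1) = x n} = ∑ s ∈ Ioc a b, (o s - 1) := by
  choose k hk using h.fiber
  rw [card_filter, h.sum_range_eq_sum_sum hk hM hb]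
  refine sum_congr rfl fun s _ => ?_
  have hfilter : {n ∈ Ico (k s) (k s + o s) | x (n + 1) = x n} = Ico (k s) (k s + (o s - 1)) := by
    ext n
    have hsucc : x n = s ∧ x (n + 1) = x n ↔ x n = s ∧ x (n + 1) = s :=
      and_congr_right fun hn => by rw [hn]
    rw [mem_filter, mem_Ico, mem_Ico, ← hk, hsucc, hk, hk]
    omega
  rw [← card_filter, hfilter, Nat.card_Ico, Nat.add_sub_cancel_left]

end Enumerates

end Enumerations

section Configurations

/-- A configuration of particles on `ℤ` with at most two particles per site, full far to the left
and empty far to the right. It is encoded by its excitations over the vacuum in which exactly the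
sites `s ≤ 0` are full: the number of particles at `s ≥ 1`, the number of holes at `s ≤ 0`. -/
abbrev Config : Type := ℤ →₀ Fin 3

/-- The excess of particles over the vacuum at the site `s` carrying `d` excitations. -/
def excess (s : ℤ) (d : Fin 3) : ℤ := if 1 ≤ s then d else -d

namespace Config

/-- The number of particles at a site; `Fin.rev` exchanges particles and holes. -/
def occ (δ : Config) (s : ℤ) : Fin 3 := if 1 ≤ s then δ s else (δ s).rev

/-- The number of particles relative to the vacuum. -/
def charge (δ : Config) : ℤ := δ.sum excess

/-- The sum of the positions of the particles relative to the vacuum. -/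
def energy (δ : Config) : ℤ := δ.sum fun s d => s * excess s d

/-- The number of sites holding exactly one particle. -/
def singles (δ : Config) : ℕ := δ.sum fun _ d => if d = 1 then 1 else 0

lemma occ_eq (δ : Config) (s : ℤ) :
    ((δ.occ s : ℕ) : ℤ) = excess s (δ s) + if 1 ≤ s then 0 else 2 := by
  unfold occ excess
  split_ifs
  · simp
  · rw [Fin.val_rev]; omega

lemma occ_eq_one_iff (δ : Config) (s : ℤ) : δ.occ s = 1 ↔ δ s = 1 := by
  unfold occ
  split_ifs
  · rfl
  · generalize δ s = d; revert d; decide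

lemma occ_injective : Function.Injective occ := fun δ δ' h => by
  ext s : 1
  have hs := congrFun h s
  unfold occ at hs
  split_ifs at hs
  exacts [hs, Fin.rev_injective hs]

lemma exists_occ_eq {o : ℤ → Fin 3} (hright : ∀ᶠ s in atTop, o s = 0)
    (hleft : ∀ᶠ s in atBot, o s = 2) : ∃ δ : Config, δ.occ = o := by
  obtain ⟨b, hb⟩ := eventually_atTop.1 hright
  obtain ⟨a, ha⟩ := eventually_atBot.1 hleft
  refine ⟨Finsupp.onFinset (Icc (min a 0) (max b 1))
    (fun s => if 1 ≤ s then o s else (o s).rev) fun s hs => ?_, ?_⟩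
  · contrapose! hs
    rw [mem_Icc, not_and_or] at hs
    rcases hs with hs | hs
    · rw [if_neg (by omega), ha s (by omega)]; rfl
    · rw [if_pos (by omega), hb s (by omega)]
  · funext s
    simp only [occ, Finsupp.onFinset_apply]
    split_ifs
    exacts [rfl, Fin.rev_rev _]

lemma eventually_lt_support (δ : Config) : ∀ᶠ a in atBot, ∀ s ∈ δ.support, a < s :=
  (δ.support.eventually_all).2 fun s _ => eventually_lt_atBot s

lemma exists_enumerates (δ : Config) : ∃ x, Enumerates x fun s => δ.occ s := by
  refine _root_.exists_enumerates ?_ ?_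
  · obtain ⟨b, hb⟩ := δ.support.exists_le
    filter_upwards [eventually_gt_atTop b, eventually_ge_atTop 1] with s hbs hs
    have : δ s = 0 := Finsupp.notMem_support_iff.1 fun h => (hb s h).not_gt hbs
    simp [occ, hs, this]
  · filter_upwards [δ.eventually_lt_support, eventually_le_atBot 0] with s hsupp hs
    have : δ s = 0 := Finsupp.notMem_support_iff.1 fun h => (hsupp s h).false
    simp [occ, this, show ¬ 1 ≤ s by omega]

lemma sum_Ioc_zero_two_mul {a : ℤ} (ha : a ≤ 0) : ∑ s ∈ Ioc a 0, 2 * s = -(a * (a + 1)) := by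
  induction a, ha using Int.leInductionDown with
  | base => simp
  | pred a ha ih =>
    have hIoc : Ioc (a - 1) 0 = insert a (Ioc a 0) := by
      ext s; simp only [mem_insert, mem_Ioc]; omega
    rw [hIoc, sum_insert (by simp), ih]
    ring

section Statistics

variable {δ : Config} {x : ℕ → ℤ} {M : ℕ} {a : ℤ}

lemma sum_range_comp (h : Enumerates x fun s => δ.occ s) (hM : ∀ n, n < M ↔ a < x n)
    (ha : ∀ s ∈ δ.support, a < s) (f : ℤ → ℤ) :
    ∑ n ∈ range M, f (x n) = δ.sum (fun s d => f s * excess s d) + ∑ s ∈ Ioc a 0, 2 * f s := by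
  obtain ⟨b, hb⟩ := (insert (x 0) (insert 0 δ.support)).exists_le
  have hsupp : δ.support ⊆ Ioc a b := fun s hs =>
    mem_Ioc.2 ⟨ha s hs, hb s (mem_insert_of_mem (mem_insert_of_mem hs))⟩
  have hvac : {s ∈ Ioc a b | ¬ 1 ≤ s} = Ioc a 0 := by
    have := hb 0 (by simp)
    ext s; simp only [mem_filter, mem_Ioc]; omega
  rw [h.sum_range_comp hM (hb _ (mem_insert_self _ _)),
    δ.sum_of_support_subset hsupp _ fun s _ => by simp [excess], ← hvac, sum_filter,
    ← sum_add_distrib]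
  refine sum_congr rfl fun s _ => ?_
  rw [nsmul_eq_mul, occ_eq]
  split_ifs <;> ring

lemma charge_eq (h : Enumerates x fun s => δ.occ s) (hM : ∀ n, n < M ↔ a < x n)
    (ha : ∀ s ∈ δ.support, a < s) (ha0 : a ≤ 0) : δ.charge = M + 2 * a := by
  have hsum := sum_range_comp h hM ha fun _ => 1
  simp only [sum_const, card_range, Int.card_Ioc, nsmul_eq_mul, one_mul, mul_one] at hsum
  change _ = δ.charge + _ at hsum
  omega

lemma energy_eq (h : Enumerates x fun s => δ.occ s) (hM : ∀ n, n < M ↔ a < x n)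
    (ha : ∀ s ∈ δ.support, a < s) (ha0 : a ≤ 0) :
    δ.energy = ∑ n ∈ range M, x n + a * (a + 1) := by
  rw [sum_range_comp h hM ha fun s => s, sum_Ioc_zero_two_mul ha0, energy]
  ring

lemma singles_eq (h : Enumerates x fun s => δ.occ s) (hM : ∀ n, n < M ↔ a < x n)
    (ha : ∀ s ∈ δ.support, a < s) :
    (δ.singles : ℤ) = M - 2 * #{n ∈ range M | x (n + 1) = x n} := by
  obtain ⟨b, hb⟩ := (insert (x 0) δ.support).exists_le
  have hsupp : δ.support ⊆ Ioc a b := fun s hs =>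
    mem_Ioc.2 ⟨ha s hs, hb s (mem_insert_of_mem hs)⟩
  have hx0 := hb _ (mem_insert_self _ _)
  have hcard : ∑ s ∈ Ioc a b, (δ.occ s : ℕ) = M := by
    simpa using (h.sum_range_comp hM hx0 fun _ => (1 : ℕ)).symm
  have hsplit : δ.singles + 2 * ∑ s ∈ Ioc a b, ((δ.occ s : ℕ) - 1) = M := by
    rw [singles, δ.sum_of_support_subset hsupp _ fun s _ => by simp, mul_sum, ← sum_add_distrib,
      ← hcard]
    refine sum_congr rfl fun s _ => ?_
    simp only [← occ_eq_one_iff]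
    generalize δ.occ s = c
    revert c; decide
  rw [h.card_repetitions hM hx0]
  omega

lemma eventually_position_eq (h : Enumerates x fun s => δ.occ s) :
    ∀ᶠ n : ℕ in atTop, x n = -((n - δ.charge) / 2) := by
  obtain ⟨a₀, ha₀⟩ := eventually_atBot.1 (δ.eventually_lt_support.and (eventually_le_atBot 0))
  have hlt : ∀ a ≤ a₀, ∀ n : ℕ, a < x n ↔ n < δ.charge - 2 * a := fun a ha n => by
    obtain ⟨M, hM⟩ := h.exists_lt_iff a
    rw [← hM, charge_eq h hM (ha₀ a ha).1 (ha₀ a ha).2]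
    omega
  filter_upwards [eventually_ge_atTop (δ.charge - 2 * a₀ + 2).toNat] with n hn
  have h_ge := hlt (-((n - δ.charge) / 2) - 1) (by omega) n
  have h_le := hlt (-((n - δ.charge) / 2)) (by omega) n
  omega

end Statistics

end Config

end Configurations

section Gaps

/-- The weakly decreasing sequence `x` of particle positions has gaps `ω` and is eventually equal
to the sequence `l, l, l - 1, l - 1, …` of the vacuum shifted by `l`. -/
structure HasGaps (x : ℕ → ℤ) (ω : ℕ → ℕ) (l : ℤ) : Prop where
  gap : ∀ n, x n = x (n + 1) + ω n
  shift : ∀ᶠ n : ℕ in atTop, x n = l - n / 2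

lemma eventually_Afun_eq_sum_range {ω : ℕ → ℕ} (hω : ω ∈ He) :
    ∀ᶠ N in atTop, Afun ω = ∑ n ∈ range N, if (n + 1) % 2 = 1 then ((n : ℤ) + 1) * ω n
      else (n + 1) * (ω n - 1) := by
  refine finsum_eventually_eq_sum_range ?_
  filter_upwards [eventually_atTop.2 hω.2] with n hn
  rcases Nat.mod_two_eq_zero_or_one (n + 1) with h | h <;> simp [hn, h]

lemma eventually_Bfun_eq_sum_range {ω : ℕ → ℕ} (hω : ω ∈ He) :
    ∀ᶠ N in atTop, Bfun ω = 2 * (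
      ∑ n ∈ range N, (if (n + 1) % 2 = 1 ∧ 1 ≤ ω n then (1 : ℤ) else 0) -
      ∑ n ∈ range N, if (n + 1) % 2 = 0 ∧ ω n = 0 then 1 else 0) := by
  have hvanish : ∀ᶠ n in atTop, ¬((n + 1) % 2 = 1 ∧ 1 ≤ ω n) ∧ ¬((n + 1) % 2 = 0 ∧ ω n = 0) := by
    filter_upwards [eventually_atTop.2 hω.2] with n hn
    rcases Nat.mod_two_eq_zero_or_one (n + 1) with h | h <;> simp [hn, h]
  filter_upwards [finsum_eventually_eq_sum_range (M := ℤ) (hvanish.mono fun n hn => if_neg hn.1),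
    finsum_eventually_eq_sum_range (M := ℤ) (hvanish.mono fun n hn => if_neg hn.2)] with N h₁ h₂
  rw [Bfun, h₁, h₂]

lemma sum_range_odd_pos_sub_even_zero (ω : ℕ → ℕ) (m : ℕ) :
    ∑ n ∈ range (2 * m), (if (n + 1) % 2 = 1 ∧ 1 ≤ ω n then (1 : ℤ) else 0) -
      ∑ n ∈ range (2 * m), (if (n + 1) % 2 = 0 ∧ ω n = 0 then 1 else 0) =
    m - #{n ∈ range (2 * m) | ω n = 0} := by
  have hodd : ∑ n ∈ range (2 * m), (if (n + 1) % 2 = 1 then (1 : ℤ) else 0) = m := by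
    induction m with
    | zero => simp
    | succ m ih =>
      rw [show 2 * (m + 1) = 2 * m + 1 + 1 by ring, sum_range_succ, sum_range_succ, ih,
        if_pos (by omega), if_neg (by omega)]
      push_cast
      ring
  rw [← hodd, card_filter, Nat.cast_sum, ← sum_sub_distrib, ← sum_sub_distrib]
  refine sum_congr rfl fun n _ => ?_
  push_cast
  split_ifs <;> omega

lemma eventually_two_mul {p : ℕ → Prop} (h : ∀ᶠ n in atTop, p n) : ∀ᶠ m in atTop, p (2 * m) :=
  (tendsto_id.const_mul_atTop' two_pos).eventually h

namespace HasGaps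

variable {x x' : ℕ → ℤ} {ω ω' : ℕ → ℕ} {l l' : ℤ}

lemma sequence_unique (h : HasGaps x ω l) (h' : HasGaps x' ω l) : x = x' :=
  seq_eq_of_gaps_eq_of_eventuallyEq h.gap h'.gap <| by
    filter_upwards [h.shift, h'.shift] with n hn hn'
    rw [hn, hn']

lemma gaps_unique (h : HasGaps x ω l) (h' : HasGaps x ω' l') : l = l' ∧ ω = ω' := by
  obtain ⟨n, hn, hn'⟩ := (h.shift.and h'.shift).exists
  refine ⟨by omega, funext fun n => ?_⟩
  have := h.gap n
  have := h'.gap n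
  omega

lemma antitone (h : HasGaps x ω l) : Antitone x :=
  antitone_nat_of_succ_le fun n => by have := h.gap n; omega

lemma add_two_lt (h : HasGaps x ω l) (hω : ω ∈ He) (n : ℕ) : x (n + 2) < x n := by
  have hfst := h.gap n
  have hsnd : x (n + 1) = x (n + 2) + ω (n + 1) := h.gap (n + 1)
  have := hω.1 n
  omega

lemma eventually_window (h : HasGaps x ω l) :
    ∀ᶠ m : ℕ in atTop, x (2 * m) = l - m ∧ ∀ n, n < 2 * m ↔ l - m < x n := by
  obtain ⟨N, hN⟩ := eventually_atTop.1 h.shift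
  filter_upwards [eventually_gt_atTop N] with m hm
  have hlast := hN (2 * m - 1) (by omega)
  have hnext := hN (2 * m) (by omega)
  refine ⟨by omega, fun n => ⟨fun hn => ?_, fun hn => ?_⟩⟩
  · have := h.antitone (show n ≤ 2 * m - 1 by omega)
    omega
  · by_contra! hmn
    have := h.antitone hmn
    omega

lemma eventually_Afun_eq (h : HasGaps x ω l) (hω : ω ∈ He) :
    ∀ᶠ m : ℕ in atTop,
      Afun ω = ∑ n ∈ range (2 * m), x n - 2 * m * x (2 * m) - m * (m + 1) := by
  filter_upwards [eventually_two_mul (eventually_Afun_eq_sum_range hω)] with m hm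
  rw [hm]
  clear hm
  induction m with
  | zero => simp
  | succ m ih =>
    rw [show 2 * (m + 1) = 2 * m + 1 + 1 by ring]
    rw [sum_range_succ, sum_range_succ, ih, sum_range_succ, sum_range_succ, if_pos (by omega),
      if_neg (by omega), h.gap (2 * m), h.gap (2 * m + 1)]
    push_cast
    ring

lemma eventually_Bfun_eq (h : HasGaps x ω l) (hω : ω ∈ He) :
    ∀ᶠ m : ℕ in atTop, Bfun ω = 2 * m - 2 * #{n ∈ range (2 * m) | x (n + 1) = x n} := by
  have hrep : ∀ n, x (n + 1) = x n ↔ ω n = 0 := fun n => by have := h.gap n; omega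
  filter_upwards [eventually_two_mul (eventually_Bfun_eq_sum_range hω)] with m hm
  rw [hm, sum_range_odd_pos_sub_even_zero, mul_sub]
  simp only [hrep]

end HasGaps

lemma exists_hasGaps {ω : ℕ → ℕ} (hω : ω ∈ He) (l : ℤ) : ∃ x, HasGaps x ω l := by
  obtain ⟨x, hgap, hshift⟩ := exists_seq_with_gaps_eventuallyEq
    (d := fun n => (ω n : ℤ)) (y := fun n : ℕ => l - n / 2) <| by
      filter_upwards [eventually_atTop.2 hω.2] with n hn
      split_ifs at hn <;> omega
  exact ⟨x, hgap, hshift⟩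

lemma exists_mem_He_hasGaps {x : ℕ → ℤ} {l : ℤ} (hx : Antitone x) (hx_two : ∀ n, x (n + 2) < x n)
    (hshift : ∀ᶠ n : ℕ in atTop, x n = l - n / 2) : ∃ ω ∈ He, HasGaps x ω l := by
  have hle : ∀ n, x (n + 1) ≤ x n := fun n => hx n.le_succ
  refine ⟨fun n => (x n - x (n + 1)).toNat, ⟨fun n => ?_, eventually_atTop.1 ?_⟩,
    fun n => ?_, hshift⟩
  · have : x (n + 1 + 1) < x n := hx_two n
    simp only [Int.toNat_eq_zero]
    omega
  · filter_upwards [hshift, (tendsto_add_atTop_nat 1).eventually hshift] with n hn hn_succ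
    rw [hn, hn_succ]
    split_ifs <;> omega
  · have := hle n
    omega

end Gaps

section Bijection

namespace Config

/-- The configuration `δ` has its particles at positions with gaps `ω` and shift `l`. -/
def HasGaps (δ : Config) (ω : ℕ → ℕ) (l : ℤ) : Prop :=
  ∃ x, Enumerates x (fun s => δ.occ s) ∧ _root_.HasGaps x ω l

variable {δ δ' : Config} {ω ω' : ℕ → ℕ} {l l' : ℤ}

lemma HasGaps.config_unique (h : δ.HasGaps ω l) (h' : δ'.HasGaps ω l) : δ = δ' := by
  obtain ⟨x, hx, hgaps⟩ := h
  obtain ⟨x', hx', hgaps'⟩ := h'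
  obtain rfl := hgaps.sequence_unique hgaps'
  exact occ_injective <| funext fun s => Fin.ext (congrFun (hx.multiplicity_unique hx') s)

lemma HasGaps.gaps_unique (h : δ.HasGaps ω l) (h' : δ.HasGaps ω' l') : l = l' ∧ ω = ω' := by
  obtain ⟨x, hx, hgaps⟩ := h
  obtain ⟨x', hx', hgaps'⟩ := h'
  obtain rfl := hx.sequence_unique hx'
  exact hgaps.gaps_unique hgaps'

lemma HasGaps.statistics (h : δ.HasGaps ω l) (hω : ω ∈ He) :
    δ.charge = 2 * l ∧ δ.energy = l * (l + 1) + Afun ω ∧ (δ.singles : ℤ) = Bfun ω := by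
  obtain ⟨x, hx, hgaps⟩ := h
  have hleft : Tendsto (fun m : ℕ => l - m) atTop atBot :=
    tendsto_atBot_add_const_left _ l (tendsto_neg_atTop_atBot.comp tendsto_natCast_atTop_atTop)
  obtain ⟨m, ⟨hxm, hM⟩, hA, hB, ha, ha0⟩ := (hgaps.eventually_window.and <|
    (hgaps.eventually_Afun_eq hω).and <| (hgaps.eventually_Bfun_eq hω).and <|
      hleft.eventually <| δ.eventually_lt_support.and <| eventually_le_atBot 0).exists
  refine ⟨?_, ?_, ?_⟩
  · rw [charge_eq hx hM ha ha0]
    push_cast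
    ring
  · rw [energy_eq hx hM ha ha0, hA, hxm]
    ring
  · rw [singles_eq hx hM ha, hB]
    push_cast
    ring

lemma exists_hasGaps_config (hω : ω ∈ He) (l : ℤ) : ∃ δ : Config, δ.HasGaps ω l := by
  obtain ⟨x, hx⟩ := exists_hasGaps hω l
  obtain ⟨o, ho⟩ := exists_enumerates_of_add_two_lt hx.antitone (hx.add_two_lt hω)
  have hright : ∀ᶠ s in atTop, o s = 0 := by
    filter_upwards [eventually_gt_atTop (x 0)] with s hs
    obtain ⟨k, hk⟩ := ho.fiber s
    by_contra ho0
    have hks := (hk k).2 ⟨le_rfl, by have := Fin.pos_iff_ne_zero.2 ho0; simpa using this⟩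
    exact (hx.antitone k.zero_le).not_gt (hks ▸ hs)
  have hleft : ∀ᶠ s in atBot, o s = 2 := by
    obtain ⟨N, hN⟩ := eventually_atTop.1 hx.shift
    filter_upwards [eventually_le_atBot (l - N)] with s hs
    obtain ⟨k, hk⟩ := ho.fiber s
    have hfst := (hk (2 * (l - s).toNat)).1 (by rw [hN _ (by omega)]; omega)
    have hsnd := (hk (2 * (l - s).toNat + 1)).1 (by rw [hN _ (by omega)]; omega)
    apply Fin.ext
    have := (o s).is_lt
    change (o s : ℕ) = 2
    omega
  obtain ⟨δ, rfl⟩ := exists_occ_eq hright hleft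
  exact ⟨δ, x, ho, hx⟩

lemma exists_gaps_of_charge_eq (h : δ.charge = 2 * l) : ∃ ω ∈ He, δ.HasGaps ω l := by
  obtain ⟨x, hx⟩ := δ.exists_enumerates
  have hx_two : ∀ n, x (n + 2) < x n := hx.add_two_lt fun s => by have := (δ.occ s).is_lt; omega
  obtain ⟨ω, hω, hgaps⟩ := exists_mem_He_hasGaps (l := l) hx.antitone hx_two <| by
    filter_upwards [eventually_position_eq hx] with n hn
    omega
  exact ⟨ω, hω, x, hx, hgaps⟩

theorem exists_equiv_even_charge :
    ∃ e : ℤ × He ≃ {δ : Config | Even δ.charge}, ∀ l ω,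
      (e (l, ω)).1.charge = 2 * l ∧ (e (l, ω)).1.energy = l * (l + 1) + Afun ω ∧
        ((e (l, ω)).1.singles : ℤ) = Bfun ω := by
  choose Φ hΦ using fun p : ℤ × He => exists_hasGaps_config p.2.2 p.1
  have hstat := fun p => (hΦ p).statistics p.2.2
  let e : ℤ × He → {δ : Config | Even δ.charge} :=
    fun p => ⟨Φ p, even_iff_two_dvd.2 ⟨p.1, (hstat p).1⟩⟩
  have he : Function.Bijective e := by
    refine ⟨fun p p' hpp' => ?_, fun ⟨δ, hδ⟩ => ?_⟩
    · have hp := hΦ p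
      rw [show Φ p = Φ p' from congrArg Subtype.val hpp'] at hp
      obtain ⟨hl, hω⟩ := hp.gaps_unique (hΦ p')
      exact Prod.ext hl (Subtype.ext hω)
    · obtain ⟨l, hl⟩ := even_iff_two_dvd.1 hδ
      obtain ⟨ω, hω, hgaps⟩ := exists_gaps_of_charge_eq hl
      exact ⟨(l, ⟨ω, hω⟩), Subtype.ext ((hΦ _).config_unique hgaps)⟩
  exact ⟨.ofBijective e he, fun l ω => hstat (l, ω)⟩

end Config

end Bijection

section Weights

variable {𝕜 : Type*}

lemma prod_zpow_eq_zpow_sum₀ {ι : Type*} [CommGroupWithZero 𝕜] {a : 𝕜} (ha : a ≠ 0) (s : Finset ι)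
    (e : ι → ℤ) : ∏ i ∈ s, a ^ e i = a ^ ∑ i ∈ s, e i := by
  classical
  induction s using Finset.induction_on with
  | empty => simp
  | insert i s hi ih => rw [prod_insert hi, sum_insert hi, ih, zpow_add₀ ha]

/-- The factor contributed by the site `s` carrying `d` excitations to `Config.weight`. -/
def siteWeight [DivisionRing 𝕜] (q t z : 𝕜) (s : ℤ) (d : Fin 3) : 𝕜 :=
  (if d = 1 then t else 1) * z ^ excess s d * q ^ (s * excess s d)

/-- The Boltzmann weight of a configuration: `t` counts the singly occupied sites, `z` the charge
and `q` the energy. -/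
def Config.weight [DivisionRing 𝕜] (q t z : 𝕜) (δ : Config) : 𝕜 :=
  t ^ δ.singles * z ^ δ.charge * q ^ δ.energy

section Field

variable [Field 𝕜] {q z : 𝕜} (t : 𝕜)

lemma siteWeight_zero (q t z : 𝕜) (s : ℤ) : siteWeight q t z s 0 = 1 := by
  simp [siteWeight, excess]

lemma siteWeight_natCast_add_one (q t z : 𝕜) (n : ℕ) (d : Fin 3) :
    siteWeight q t z (n + 1) d =
      (if d = 1 then t else 1) * z ^ (d : ℕ) * (q ^ (d : ℕ)) ^ (n + 1) := by
  have hexcess : excess (n + 1) d = (d : ℕ) := if_pos (by omega)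
  rw [siteWeight, hexcess, zpow_natCast, mul_comm ((n : ℤ) + 1), ← pow_mul]
  norm_cast

lemma siteWeight_neg_natCast (q t z : 𝕜) (n : ℕ) (d : Fin 3) :
    siteWeight q t z (-n) d =
      (if d = 1 then t else 1) * z⁻¹ ^ (d : ℕ) * (q ^ (d : ℕ)) ^ n := by
  have hexcess : excess (-n) d = -(d : ℕ) := if_neg (by omega)
  rw [siteWeight, hexcess, neg_mul_neg, mul_comm (n : ℤ), ← pow_mul, inv_pow,
    zpow_neg, zpow_natCast]
  norm_cast

lemma Config.weight_eq_prod (hq : q ≠ 0) (hz : z ≠ 0) (δ : Config) :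
    δ.weight q t z = δ.prod (siteWeight q t z) := by
  have ht : t ^ δ.singles = ∏ s ∈ δ.support, if δ s = 1 then t else 1 := by
    rw [singles, Finsupp.sum, ← prod_pow_eq_pow_sum]
    exact prod_congr rfl fun s _ => by split_ifs <;> simp
  rw [weight, charge, energy, Finsupp.sum, Finsupp.sum, ← prod_zpow_eq_zpow_sum₀ hz,
    ← prod_zpow_eq_zpow_sum₀ hq, ht, ← prod_mul_distrib, ← prod_mul_distrib]
  rfl

lemma Config.weight_add_weight_neg (q t z : 𝕜) (δ : Config) :
    δ.weight q t z + δ.weight q t (-z) =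
      {δ : Config | Even δ.charge}.indicator (fun δ => 2 * δ.weight q t z) δ := by
  by_cases h : Even δ.charge
  · rw [Set.indicator_of_mem (by exact h), weight, weight, h.neg_zpow, two_mul]
  · rw [Set.indicator_of_notMem (by exact h), weight, weight, (Int.not_even_iff_odd.1 h).neg_zpow]
    ring

lemma Config.weight_eq_mul {δ : Config} {l A B : ℤ} (hq : q ≠ 0) (hcharge : δ.charge = 2 * l)
    (henergy : δ.energy = l * (l + 1) + A) (hsingles : (δ.singles : ℤ) = B) :
    δ.weight q t z = (q ^ (l * (l + 1)) * z ^ (2 * l)) * (q ^ A * t ^ B) := by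
  rw [weight, hcharge, henergy, ← hsingles, zpow_natCast, zpow_add₀ hq]
  ring

end Field

variable [NormedField 𝕜] {q z : 𝕜} (t : 𝕜)

lemma summable_norm_siteWeight (hq : ‖q‖ < 1) (z : 𝕜) {d : Fin 3} (hd : d ≠ 0) :
    Summable fun s => ‖siteWeight q t z s d‖ := by
  have hgeom : Summable fun n : ℕ => (‖q‖ ^ (d : ℕ)) ^ n :=
    summable_geometric_of_lt_one (by positivity)
      (pow_lt_one₀ (norm_nonneg q) hq (Fin.val_ne_zero_iff.2 hd))
  rw [← (Equiv.neg ℤ).summable_iff]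
  refine .of_nat_of_neg_add_one ?_ ?_
  · simp only [Function.comp_apply, Equiv.neg_apply, siteWeight_neg_natCast, norm_mul, norm_pow]
    exact hgeom.mul_left _
  · simp only [Function.comp_apply, Equiv.neg_apply, neg_neg, siteWeight_natCast_add_one, norm_mul,
      norm_pow]
    exact ((summable_nat_add_iff 1).2 hgeom).mul_left _

lemma summable_norm_weight (hq0 : q ≠ 0) (hq1 : ‖q‖ < 1) (hz : z ≠ 0) :
    Summable fun δ : Config => ‖δ.weight q t z‖ := by
  simp only [Config.weight_eq_prod t hq0 hz]
  exact summable_norm_finsupp_prod (siteWeight_zero q t z) fun _ => summable_norm_siteWeight t hq1 z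

theorem hasProd_tsum_weight [CompleteSpace 𝕜] (hq0 : q ≠ 0) (hq1 : ‖q‖ < 1) (hz : z ≠ 0) :
    HasProd (fun i : ℕ => (1 + t * z * q ^ (i + 1) + z ^ 2 * q ^ (2 * (i + 1))) *
      (1 + t * z⁻¹ * q ^ i + z⁻¹ ^ 2 * q ^ (2 * i))) (∑' δ : Config, δ.weight q t z) := by
  have hprod := hasProd_sum_tsum_finsupp_prod (siteWeight_zero q t z) fun _ =>
    summable_norm_siteWeight t hq1 z
  rw [← (Equiv.neg ℤ).hasProd_iff] at hprod
  simp only [Config.weight_eq_prod t hq0 hz]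
  refine hprod.nat_mul_neg_add_one.congr_fun fun i => ?_
  simp only [Function.comp_apply, Equiv.neg_apply, neg_neg, siteWeight_natCast_add_one,
    siteWeight_neg_natCast, Fin.sum_univ_three]
  simp
  ring

lemma exists_mem_He_Afun_eq_zero_Bfun_eq_zero : ∃ ω ∈ He, Afun ω = 0 ∧ Bfun ω = 0 := by
  let vac : ℕ → ℕ := fun n => if (n + 1) % 2 = 0 then 1 else 0
  have hmod : ∀ n : ℕ, (n + 1) % 2 = 0 ∨ (n + 1) % 2 = 1 := fun n => Nat.mod_two_eq_zero_or_one _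
  refine ⟨vac, ⟨fun n => ?_, 0, fun n _ => rfl⟩, ?_, ?_⟩
  · simp only [vac, ite_eq_right_iff, one_ne_zero, imp_false]
    omega
  · rw [Afun, ← finsum_zero (α := ℕ)]
    congr! with n
    rcases hmod n with h | h <;> simp [vac, h]
  · have hodd : ∀ n, ¬((n + 1) % 2 = 1 ∧ 1 ≤ vac n) := fun n => by
      rcases hmod n with h | h <;> simp [vac, h]
    have heven : ∀ n, ¬((n + 1) % 2 = 0 ∧ vac n = 0) := fun n => by
      rcases hmod n with h | h <;> simp [vac, h]
    simp [Bfun, hodd, heven]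

lemma summable_norm_gaps_and_shifts (hq0 : q ≠ 0) (hq1 : ‖q‖ < 1) (hz : z ≠ 0) :
    (Summable fun ω : He => ‖q ^ Afun ω.1 * t ^ Bfun ω.1‖) ∧
      Summable fun l : ℤ => ‖q ^ (l * (l + 1)) * z ^ (2 * l)‖ := by
  obtain ⟨e, he⟩ := Config.exists_equiv_even_charge
  have hweight : ∀ l ω, (e (l, ω)).1.weight q t z =
      (q ^ (l * (l + 1)) * z ^ (2 * l)) * (q ^ Afun ω.1 * t ^ Bfun ω.1) := fun l ω =>
    Config.weight_eq_mul t hq0 (he l ω).1 (he l ω).2.1 (he l ω).2.2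
  have hsum := (summable_norm_weight t hq0 hq1 hz).comp_injective
    (Subtype.val_injective.comp e.injective)
  obtain ⟨ω₀, hω₀, hA, hB⟩ := exists_mem_He_Afun_eq_zero_Bfun_eq_zero
  constructor
  · simpa [Function.comp_def, hweight] using
      hsum.comp_injective (Prod.mk_right_injective (0 : ℤ))
  · simpa [Function.comp_def, hweight, hA, hB] using
      hsum.comp_injective (Prod.mk_left_injective (⟨ω₀, hω₀⟩ : He))

theorem tsum_weight_add_tsum_weight_neg [CompleteSpace 𝕜] (hq0 : q ≠ 0) (hq1 : ‖q‖ < 1)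
    (hz : z ≠ 0) :
    ∑' δ : Config, δ.weight q t z + ∑' δ : Config, δ.weight q t (-z) =
      2 * (∑' ω : He, q ^ Afun ω.1 * t ^ Bfun ω.1) *
        ∑' l : ℤ, q ^ (l * (l + 1)) * z ^ (2 * l) := by
  obtain ⟨e, he⟩ := Config.exists_equiv_even_charge
  obtain ⟨hgaps, hshifts⟩ := summable_norm_gaps_and_shifts t hq0 hq1 hz
  calc ∑' δ : Config, δ.weight q t z + ∑' δ : Config, δ.weight q t (-z)
      = ∑' δ : Config, {δ : Config | Even δ.charge}.indicator (fun δ => 2 * δ.weight q t z) δ := by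
        rw [← (summable_norm_weight t hq0 hq1 hz).of_norm.tsum_add
          (summable_norm_weight t hq0 hq1 (neg_ne_zero.2 hz)).of_norm]
        simp only [Config.weight_add_weight_neg]
    _ = ∑' p : ℤ × He, 2 * (e p).1.weight q t z := by
        rw [← _root_.tsum_subtype, ← e.tsum_eq]
    _ = ∑' p : ℤ × He, 2 * ((q ^ (p.1 * (p.1 + 1)) * z ^ (2 * p.1)) *
          (q ^ Afun p.2.1 * t ^ Bfun p.2.1)) :=
        tsum_congr fun p => by
          obtain ⟨hcharge, henergy, hsingles⟩ := he p.1 p.2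
          rw [← Config.weight_eq_mul t hq0 hcharge henergy hsingles]
    _ = 2 * (∑' ω : He, q ^ Afun ω.1 * t ^ Bfun ω.1) *
          ∑' l : ℤ, q ^ (l * (l + 1)) * z ^ (2 * l) := by
        rw [tsum_mul_left, ← tsum_mul_tsum_of_summable_norm hshifts hgaps,
          mul_comm (tsum _), mul_assoc]

end Weights

theorem statement0_general {𝕜 : Type*} [NormedField 𝕜] [CompleteSpace 𝕜] (q t z : 𝕜) (hq0 : q ≠ 0)
    (hq1 : ‖q‖ < 1) (hz : z ≠ 0) :
    Summable (fun ℓ : ℤ => q ^ (ℓ * (ℓ + 1)) * z ^ (2 * ℓ)) ∧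
    Multipliable (fun i : ℕ =>
      (1 + t * z * q ^ (i + 1) + z ^ 2 * q ^ (2 * (i + 1))) *
      (1 + t * z⁻¹ * q ^ i + z⁻¹ ^ 2 * q ^ (2 * i))) ∧
    Multipliable (fun i : ℕ =>
      (1 - t * z * q ^ (i + 1) + z ^ 2 * q ^ (2 * (i + 1))) *
      (1 - t * z⁻¹ * q ^ i + z⁻¹ ^ 2 * q ^ (2 * i))) ∧
    2 * (∑' ω : He, q ^ Afun ω.1 * t ^ Bfun ω.1) *
        (∑' ℓ : ℤ, q ^ (ℓ * (ℓ + 1)) * z ^ (2 * ℓ)) =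
      (∏' i : ℕ, (1 + t * z * q ^ (i + 1) + z ^ 2 * q ^ (2 * (i + 1))) *
        (1 + t * z⁻¹ * q ^ i + z⁻¹ ^ 2 * q ^ (2 * i))) +
      (∏' i : ℕ, (1 - t * z * q ^ (i + 1) + z ^ 2 * q ^ (2 * (i + 1))) *
        (1 - t * z⁻¹ * q ^ i + z⁻¹ ^ 2 * q ^ (2 * i))) := by
  have hpos := hasProd_tsum_weight t hq0 hq1 hz
  have hneg := hasProd_tsum_weight t hq0 hq1 (neg_ne_zero.2 hz)
  simp only [mul_neg, neg_mul, inv_neg, neg_sq, ← sub_eq_add_neg] at hneg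
  refine ⟨(summable_norm_gaps_and_shifts t hq0 hq1 hz).2.of_norm, hpos.multipliable,
    hneg.multipliable, ?_⟩
  rw [hpos.tprod_eq, hneg.tprod_eq, tsum_weight_add_tsum_weight_neg t hq0 hq1 hz]

theorem statement0 (q t z : ℝ) (hq0 : 0 < q) (hq1 : q < 1) (ht : 1 ≤ t) (hz : 0 < z) :
    Summable (fun ℓ : ℤ => q ^ (ℓ * (ℓ + 1)) * z ^ (2 * ℓ)) ∧
    Multipliable (fun i : ℕ =>
      (1 + t * z * q ^ (i + 1) + z ^ 2 * q ^ (2 * (i + 1))) *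
      (1 + t * z⁻¹ * q ^ i + z⁻¹ ^ 2 * q ^ (2 * i))) ∧
    Multipliable (fun i : ℕ =>
      (1 - t * z * q ^ (i + 1) + z ^ 2 * q ^ (2 * (i + 1))) *
      (1 - t * z⁻¹ * q ^ i + z⁻¹ ^ 2 * q ^ (2 * i))) ∧
    2 * Seven q t * (∑' ℓ : ℤ, q ^ (ℓ * (ℓ + 1)) * z ^ (2 * ℓ)) =
      (∏' i : ℕ, (1 + t * z * q ^ (i + 1) + z ^ 2 * q ^ (2 * (i + 1))) *
        (1 + t * z⁻¹ * q ^ i + z⁻¹ ^ 2 * q ^ (2 * i))) +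
      (∏' i : ℕ, (1 - t * z * q ^ (i + 1) + z ^ 2 * q ^ (2 * (i + 1))) *
        (1 - t * z⁻¹ * q ^ i + z⁻¹ ^ 2 * q ^ (2 * i))) :=
  statement0_general q t z hq0.ne' (by rwa [Real.norm_of_nonneg hq0.le]) hz.ne'
end

section
/- For all real numbers q̃, t, z with 0 < q̃ < 1, t ≥ 1 and z > 0, one has 2·t·S_odd(q̃,t)·Σ_{ℓ∈ℤ} q̃^{(ℓ+1)²} z^{2ℓ+1} = Π_{i≥1} (1 + t·z·q̃^i + z²·q̃^{2i})·(1 + t·z⁻¹·q̃^{i−1} + z⁻²·q̃^{2(i−1)}) − Π_{i≥1} (1 − t·z·q̃^i + z²·q̃^{2i})·(1 − t·z⁻¹·q̃^{i−1} + z⁻²·q̃^{2(i−1)}), where the sum over ℓ and the infinite products converge absolutely. -/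
open scoped BigOperators

/-!
Put `P(x) = 1 + t x + x²` and `G(x) = ∏_{i ≥ 0} P(q^i x) = ∑_n c_n x^n`. Comparing coefficients in
`G(x) = P(x) G(q x)` gives a two-term recursion for `c_n`. Since `P(x⁻¹) = x⁻² P(x)`, keeping only
the first `n + 1` factors in `z⁻¹` of the product `∏_{i ≥ 1} P(q^i z) ∏_{i ≥ 0} P(q^i z⁻¹)` leaves
`q^(n(n+1)) z^(-2(n+1)) G(q^(-n) z)`. The odd part in `z` of this is
`∑_K q^(-K²) c_{2K+1} · q^((K-n)²) z^(2(K-n)-1)`, so if `q^(-K²) c_{2K+1}` tends to `L`, then by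
dominated convergence the odd part of the whole product is `L ∑_m q^(m²) z^(2m-1)`.

It remains to see that `L` is `t` times the sum over `Ho`. Give each word without two consecutive
zeros the product of the weights of its letters. Splitting off the last letter, and with a final
zero also the non-zero letter before it, gives the recursion of `(1 - q^(n+1)) c_{n+1} / t` for the
total weight of the words of length `n`. A sequence in `Ho` that agrees with `1, 0, 1, 0, …` from
position `2K` on is determined by a word of length `2K`, and its weight is that of the word up to
the factor `q^(-K²)`. As `K` grows, these sequences exhaust `Ho`. The sum over `Ho` converges
absolutely because for `0 < q < 1`, `t ≥ 0` the `q^(-K²) c_{2K+1}` are bounded, being among the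
non-negative terms of the convergent truncated products at `z = 1`.
-/

namespace OddTheta

open Filter Topology

/-! ### Limits of series -/

section Series

/-- The sequence `u (n + 1) + ε * u n` decays at the rate `2 * ε`, for every `ε > 0`. -/
lemma summable_mul_pow_of_le_mul_add_mul {u α β : ℕ → ℝ} (hu : ∀ n, 0 ≤ u n)
    (hα : Tendsto α atTop (𝓝 0)) (hβ : Tendsto β atTop (𝓝 0))
    (h : ∀ n, u (n + 2) ≤ α n * u (n + 1) + β n * u n) {r : ℝ} (hr : 0 ≤ r) :
    Summable fun n => u n * r ^ n := by
  obtain ⟨ε, hε, hεr⟩ : ∃ ε > 0, 2 * ε * r ≤ 1 / 2 := by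
    refine ⟨1 / (4 * (r + 1)), by positivity, ?_⟩
    rw [mul_one_div, div_mul_eq_mul_div, div_le_div_iff₀ (by positivity) two_pos]
    linarith
  set v : ℕ → ℝ := fun n => (u (n + 1) + ε * u n) * r ^ n
  have hv : ∀ n, 0 ≤ v n := fun n =>
    mul_nonneg (add_nonneg (hu _) (mul_nonneg hε.le (hu n))) (by positivity)
  have hdecay : ∀ᶠ n in atTop, ‖v (n + 1)‖ ≤ 1 / 2 * ‖v n‖ := by
    filter_upwards [hα.eventually_le_const hε, hβ.eventually_le_const (pow_pos hε 2)] with n hαn hβn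
    rw [Real.norm_of_nonneg (hv _), Real.norm_of_nonneg (hv _)]
    have hstep : u (n + 2) + ε * u (n + 1) ≤ 2 * ε * (u (n + 1) + ε * u n) := by
      nlinarith [h n, mul_le_mul_of_nonneg_right hαn (hu (n + 1)),
        mul_le_mul_of_nonneg_right hβn (hu n), mul_nonneg (pow_pos hε 2).le (hu n)]
    calc v (n + 1) = (u (n + 2) + ε * u (n + 1)) * r ^ (n + 1) := rfl
      _ ≤ 2 * ε * (u (n + 1) + ε * u n) * r ^ (n + 1) := by gcongr
      _ = 2 * ε * r * v n := by ring
      _ ≤ 1 / 2 * v n := mul_le_mul_of_nonneg_right hεr (hv n)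
  have hsum : Summable v := summable_of_ratio_norm_eventually_le one_half_lt_one hdecay
  refine (summable_nat_add_iff 1).1 (.of_nonneg_of_le (fun n => ?_) (fun n => ?_) (hsum.mul_left r))
  · exact mul_nonneg (hu _) (by positivity)
  · calc u (n + 1) * r ^ (n + 1) ≤ (u (n + 1) + ε * u n) * r ^ (n + 1) :=
          mul_le_mul_of_nonneg_right (le_add_of_nonneg_right (mul_nonneg hε.le (hu n)))
            (by positivity)
      _ = r * v n := by ring

lemma tendsto_tsum_nat_mul_sub {R : Type*} [NormedRing R] [CompleteSpace R] {c : ℕ → R} {L : R}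
    (hc : Tendsto c atTop (𝓝 L)) {θ : ℤ → R} (hθ : Summable fun m => ‖θ m‖) :
    Tendsto (fun n : ℕ => ∑' k : ℕ, c k * θ (k - n)) atTop (𝓝 (∑' m, L * θ m)) := by
  obtain ⟨C, hC⟩ := hc.norm.bddAbove_range
  let d : ℤ → R := fun k => if 0 ≤ k then c k.toNat else 0
  have hd : ∀ k, ‖d k‖ ≤ C := fun k => by
    by_cases hk : 0 ≤ k
    · simpa only [d, if_pos hk] using hC ⟨k.toNat, rfl⟩
    · simpa only [d, if_neg hk, norm_zero] using (norm_nonneg (c 0)).trans (hC ⟨0, rfl⟩)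
  have hshift : ∀ n : ℕ, ∑' k : ℕ, c k * θ (k - n) = ∑' m : ℤ, d (m + n) * θ m := fun n => by
    rw [← (Equiv.subRight (n : ℤ)).tsum_eq,
      ← (Nat.cast_injective (R := ℤ)).tsum_eq fun k hk => ?_]
    · simp [d]
    · have hk0 : 0 ≤ k := by
        by_contra hneg
        exact hk (by simp [d, hneg])
      exact ⟨k.toNat, Int.toNat_of_nonneg hk0⟩
  simp only [hshift]
  refine tendsto_tsum_of_dominated_convergence (hθ.mul_left C) (fun m => ?_)
    (Eventually.of_forall fun n m => ?_)
  · have hindex : Tendsto (fun n : ℕ => (m + n).toNat) atTop atTop :=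
      tendsto_atTop.2 fun b => by
        filter_upwards [eventually_ge_atTop (b + m.natAbs)] with n hn
        lia
    refine (Tendsto.congr' ?_ (hc.comp hindex)).mul_const _
    filter_upwards [eventually_ge_atTop m.natAbs] with n hn
    exact (if_pos (by lia)).symm
  · exact (norm_mul_le _ _).trans (mul_le_mul_of_nonneg_right (hd _) (norm_nonneg _))

lemma summable_of_tsum_subtype_le {ι : Type*} {f : ι → ℝ} (hf : ∀ i, 0 ≤ f i) {X : ℕ → Set ι}
    (hX : ∀ i, ∀ᶠ K in atTop, i ∈ X K) (hs : ∀ K, Summable fun i : X K => f i) {C : ℝ}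
    (hC : ∀ K, ∑' i : X K, f i ≤ C) : Summable f := by
  refine summable_of_sum_le hf (c := C) fun F => ?_
  obtain ⟨K, hK⟩ := ((Finset.eventually_all F).2 fun i _ => hX i).exists
  calc ∑ i ∈ F, f i = ∑ i ∈ F, (X K).indicator f i :=
        Finset.sum_congr rfl fun i hi => (Set.indicator_of_mem (hK i hi) f).symm
    _ ≤ ∑' i, (X K).indicator f i :=
        (summable_subtype_iff_indicator.1 (hs K)).sum_le_tsum F fun i _ =>
          Set.indicator_nonneg (fun i _ => hf i) i
    _ = ∑' i : X K, f i := (tsum_subtype (X K) f).symm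
    _ ≤ C := hC K

lemma tendsto_tsum_subtype {ι E : Type*} [NormedAddCommGroup E] [CompleteSpace E] {f : ι → E}
    (hf : Summable fun i => ‖f i‖) {X : ℕ → Set ι} (hX : ∀ i, ∀ᶠ K in atTop, i ∈ X K) :
    Tendsto (fun K => ∑' i : X K, f i) atTop (𝓝 (∑' i, f i)) := by
  simp only [tsum_subtype]
  refine tendsto_tsum_of_dominated_convergence hf (fun i => ?_)
    (Eventually.of_forall fun K i => norm_indicator_le_norm_self f i)
  refine tendsto_const_nhds.congr' ?_
  filter_upwards [hX i] with K hK using (Set.indicator_of_mem hK f).symm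

lemma summable_norm_piSingle {ι E : Type*} [DecidableEq ι] [SeminormedAddCommGroup E] (i : ι)
    (a : E) : Summable fun j => ‖(Pi.single i a : ι → E) j‖ :=
  summable_of_ne_finset_zero (s := {i}) fun j hj => by
    rw [Pi.single_eq_of_ne (by simpa using hj), norm_zero]

variable {α R : Type*} [NormedRing R] {n : ℕ} {f : α → R} {w : (Fin n → α) → R}

lemma summable_norm_last_mul_init (hf : Summable fun a => ‖f a‖) (hw : Summable fun v => ‖w v‖) :
    Summable fun v : Fin (n + 1) → α => ‖f (v (Fin.last n)) * w (Fin.init v)‖ := by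
  rw [← (Fin.snocEquiv fun _ => α).summable_iff]
  simpa [Function.comp_def, Fin.snocEquiv] using hf.mul_norm hw

lemma tsum_last_mul_init [CompleteSpace R] (hf : Summable fun a => ‖f a‖)
    (hw : Summable fun v => ‖w v‖) :
    ∑' v : Fin (n + 1) → α, f (v (Fin.last n)) * w (Fin.init v) = (∑' a, f a) * ∑' v, w v := by
  rw [tsum_mul_tsum_of_summable_norm hf hw, ← (Fin.snocEquiv fun _ => α).tsum_eq]
  simp [Fin.snocEquiv]

end Series

/-! ### The one-sided product as a power series -/

section OneSided

/-- The quadratic polynomial `1 + t x + x²` whose values are the factors of the products. -/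
def quadFactor {R : Type*} [Semiring R] (t x : R) : R := 1 + t * x + x ^ 2

/-- The coefficients of the power series expansion of `∏_{i ≥ 0} (1 + t q^i x + q^(2i) x²)`,
defined by the recursion that comes from comparing the product at `x` and at `q x`. -/
def productCoeff {F : Type*} [Field F] (q t : F) : ℕ → F
  | 0 => 1
  | 1 => t / (1 - q)
  | n + 2 => (t * q ^ (n + 1) * productCoeff q t (n + 1) + q ^ n * productCoeff q t n) /
      (1 - q ^ (n + 2))

lemma productCoeff_nonneg {q t : ℝ} (hq0 : 0 ≤ q) (hq1 : q < 1) (ht : 0 ≤ t) :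
    ∀ n, 0 ≤ productCoeff q t n
  | 0 => zero_le_one
  | 1 => div_nonneg ht (sub_nonneg.2 hq1.le)
  | n + 2 => by
    have h₁ := productCoeff_nonneg hq0 hq1 ht (n + 1)
    have h₀ := productCoeff_nonneg hq0 hq1 ht n
    have hden : 0 ≤ 1 - q ^ (n + 2) := sub_nonneg.2 (pow_le_one₀ hq0 hq1.le)
    rw [productCoeff]
    positivity

variable {𝕜 : Type*} [NormedField 𝕜] {q t : 𝕜}

/-- The power series with coefficients `productCoeff`; by `hasProd_quadFactor` its value at `x` is
`∏_{i ≥ 0} (1 + t q^i x + q^(2i) x²)`. -/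
noncomputable def productSeries (q t x : 𝕜) : 𝕜 := ∑' n : ℕ, productCoeff q t n * x ^ n

lemma one_sub_pow_succ_ne_zero (hq : ‖q‖ < 1) (n : ℕ) : 1 - q ^ (n + 1) ≠ 0 := by
  refine sub_ne_zero.2 fun h => (pow_lt_one₀ (norm_nonneg q) hq n.succ_ne_zero).ne ?_
  rw [← norm_pow, ← h, norm_one]

lemma one_sub_mul_productCoeff_one (hq : ‖q‖ < 1) : (1 - q) * productCoeff q t 1 = t := by
  rw [productCoeff, mul_div_cancel₀]
  simpa using one_sub_pow_succ_ne_zero hq 0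

lemma one_sub_pow_mul_productCoeff (hq : ‖q‖ < 1) (n : ℕ) :
    (1 - q ^ (n + 2)) * productCoeff q t (n + 2) =
      t * q ^ (n + 1) * productCoeff q t (n + 1) + q ^ n * productCoeff q t n := by
  rw [productCoeff, mul_div_cancel₀ _ (one_sub_pow_succ_ne_zero hq (n + 1))]

lemma tendsto_pow_mul_zero (hq : ‖q‖ < 1) (x : 𝕜) :
    Tendsto (fun n : ℕ => q ^ n * x) atTop (𝓝 0) := by
  simpa using (tendsto_pow_atTop_nhds_zero_of_norm_lt_one hq).mul_const x

lemma summable_norm_productCoeff_mul_pow (hq : ‖q‖ < 1) (x : 𝕜) :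
    Summable fun n => ‖productCoeff q t n * x ^ n‖ := by
  have hpow := tendsto_pow_atTop_nhds_zero_of_norm_lt_one hq
  have hden : Tendsto (fun n : ℕ => 1 - q ^ (n + 2)) atTop (𝓝 1) := by
    simpa using ((tendsto_add_atTop_iff_nat 2).2 hpow).const_sub 1
  have hα : Tendsto (fun n : ℕ => ‖t * q ^ (n + 1) / (1 - q ^ (n + 2))‖) atTop (𝓝 0) := by
    simpa using ((((tendsto_add_atTop_iff_nat 1).2 hpow).const_mul t).div hden one_ne_zero).norm
  have hβ : Tendsto (fun n : ℕ => ‖q ^ n / (1 - q ^ (n + 2))‖) atTop (𝓝 0) := by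
    simpa using (hpow.div hden one_ne_zero).norm
  simp only [norm_mul, norm_pow]
  refine summable_mul_pow_of_le_mul_add_mul (fun n => norm_nonneg _) hα hβ (fun n => ?_)
    (norm_nonneg x)
  rw [← norm_mul, ← norm_mul]
  refine le_of_eq_of_le (congrArg norm ?_) (norm_add_le _ _)
  rw [productCoeff, add_div, mul_div_right_comm, mul_div_right_comm (q ^ n)]

variable [CompleteSpace 𝕜]

lemma hasSum_productSeries (hq : ‖q‖ < 1) (x : 𝕜) :
    HasSum (fun n => productCoeff q t n * x ^ n) (productSeries q t x) :=
  (summable_norm_productCoeff_mul_pow hq x).of_norm.hasSum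

lemma productSeries_eq_quadFactor_mul (hq : ‖q‖ < 1) (x : 𝕜) :
    productSeries q t x = quadFactor t x * productSeries q t (q * x) := by
  have hx := hasSum_productSeries (t := t) hq x
  have hqx := hasSum_productSeries (t := t) hq (q * x)
  have hdiff := (hasSum_nat_add_iff' 2).2 (hx.sub hqx)
  have hrec := (((hasSum_nat_add_iff' 1).2 hqx).mul_left (t * x)).add (hqx.mul_left (x ^ 2))
  have hterm : ∀ n, productCoeff q t (n + 2) * x ^ (n + 2) -
      productCoeff q t (n + 2) * (q * x) ^ (n + 2) =
      t * x * (productCoeff q t (n + 1) * (q * x) ^ (n + 1)) +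
        x ^ 2 * (productCoeff q t n * (q * x) ^ n) := fun n => by
    linear_combination x ^ (n + 2) * one_sub_pow_mul_productCoeff (t := t) hq n
  have heq := hdiff.unique ((funext hterm).symm ▸ hrec)
  simp only [Finset.sum_range_succ, Finset.sum_range_zero, pow_zero, pow_one] at heq
  rw [quadFactor]
  rw [show productCoeff q t 0 = 1 from rfl] at heq
  linear_combination heq + x * one_sub_mul_productCoeff_one (t := t) hq

lemma productSeries_eq_prod_mul (hq : ‖q‖ < 1) (x : 𝕜) (M : ℕ) :
    productSeries q t x =
      (∏ i ∈ Finset.range M, quadFactor t (q ^ i * x)) * productSeries q t (q ^ M * x) := by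
  induction M with
  | zero => simp
  | succ M ih =>
    rw [ih, productSeries_eq_quadFactor_mul hq (q ^ M * x), Finset.prod_range_succ, mul_assoc,
      pow_succ', mul_assoc q]

lemma tendsto_productSeries_pow_mul (hq : ‖q‖ < 1) (x : 𝕜) :
    Tendsto (fun M : ℕ => productSeries q t (q ^ M * x)) atTop (𝓝 1) := by
  have hzero : ∑' n : ℕ, productCoeff q t n * 0 ^ n = 1 := by
    rw [tsum_eq_single 0 fun n hn => by simp [hn]]
    simp [productCoeff]
  rw [← hzero]
  refine tendsto_tsum_of_dominated_convergence (summable_norm_productCoeff_mul_pow (t := t) hq x)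
    (fun n => ((tendsto_pow_mul_zero hq x).pow n).const_mul _)
    (Eventually.of_forall fun M n => ?_)
  simp only [norm_mul, norm_pow]
  gcongr
  exact mul_le_of_le_one_left (norm_nonneg x) (pow_le_one₀ (norm_nonneg q) hq.le)

lemma multipliable_quadFactor (hq : ‖q‖ < 1) (x : 𝕜) :
    Multipliable fun i : ℕ => quadFactor t (q ^ i * x) := by
  have hle : ∀ i : ℕ, ‖t * (q ^ i * x) + (q ^ i * x) ^ 2‖ ≤ ‖q‖ ^ i * (‖x‖ * (‖t‖ + ‖x‖)) := by
    intro i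
    have hx : ‖q ^ i * x‖ ≤ ‖x‖ := by
      rw [norm_mul, norm_pow]
      exact mul_le_of_le_one_left (norm_nonneg x) (pow_le_one₀ (norm_nonneg q) hq.le)
    calc ‖t * (q ^ i * x) + (q ^ i * x) ^ 2‖ = ‖q ^ i * x‖ * ‖t + q ^ i * x‖ := by
          rw [← norm_mul]; ring_nf
      _ ≤ ‖q ^ i * x‖ * (‖t‖ + ‖x‖) := by
          gcongr
          exact (norm_add_le _ _).trans (by gcongr)
      _ = ‖q‖ ^ i * (‖x‖ * (‖t‖ + ‖x‖)) := by rw [norm_mul, norm_pow, mul_assoc]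
  have hsum : Summable fun i : ℕ => ‖t * (q ^ i * x) + (q ^ i * x) ^ 2‖ :=
    .of_nonneg_of_le (fun i => norm_nonneg _) hle
      ((summable_geometric_of_lt_one (norm_nonneg q) hq).mul_right _)
  simpa only [quadFactor, add_assoc] using multipliable_one_add_of_summable hsum

lemma hasProd_quadFactor (hq : ‖q‖ < 1) (x : 𝕜) :
    HasProd (fun i : ℕ => quadFactor t (q ^ i * x)) (productSeries q t x) := by
  have hprod := (multipliable_quadFactor (t := t) hq x).hasProd
  have hlim := hprod.tendsto_prod_nat.mul (tendsto_productSeries_pow_mul (t := t) hq x)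
  simp only [← productSeries_eq_prod_mul hq x, mul_one] at hlim
  rwa [tendsto_nhds_unique hlim tendsto_const_nhds] at hprod

end OneSided

/-! ### The odd part of the two-sided product -/

section TwoSided

/-- The odd coefficient `productCoeff q t (2K+1)` divided by `q^(K²)`, which is its order of decay.
Its limit is the constant in front of the theta series. -/
def normalizedCoeff {F : Type*} [Field F] (q t : F) (K : ℕ) : F :=
  productCoeff q t (2 * K + 1) / q ^ (K ^ 2)

/-- The terms of the theta series `∑_m q^(m²) z^(2m-1)`, the series over `ℓ` of the theorem shifted
by `m = ℓ + 1`. -/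
def thetaTerm {F : Type*} [Field F] (q z : F) (m : ℤ) : F := q ^ m ^ 2 * z ^ (2 * m - 1)

lemma quadFactor_inv {F : Type*} [Field F] (t : F) {x : F} (hx : x ≠ 0) :
    quadFactor t x⁻¹ = quadFactor t x / x ^ 2 := by
  rw [quadFactor, quadFactor]
  field_simp
  ring

lemma mul_productCoeff_mul_pow_eq_thetaTerm {F : Type*} [Field F] {q t z : F} (hq : q ≠ 0)
    (hz : z ≠ 0) (n K : ℕ) :
    q ^ (n * (n + 1)) / z ^ (2 * (n + 1)) *
        (productCoeff q t (2 * K + 1) * (z / q ^ n) ^ (2 * K + 1)) =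
      normalizedCoeff q t K * thetaTerm q z (K - n) := by
  have hqpow : q ^ (n * (n + 1)) / q ^ (n * (2 * K + 1)) = q ^ ((K - n : ℤ) ^ 2) / q ^ K ^ 2 := by
    simp only [← zpow_natCast, ← zpow_sub₀ hq]
    congr 1; push_cast; ring
  have hzpow : z ^ (2 * K + 1) / z ^ (2 * (n + 1)) = z ^ (2 * (K - n) - 1 : ℤ) := by
    simp only [← zpow_natCast, ← zpow_sub₀ hz]
    congr 1; push_cast; ring
  calc _ = productCoeff q t (2 * K + 1) * (q ^ (n * (n + 1)) / q ^ (n * (2 * K + 1))) *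
        (z ^ (2 * K + 1) / z ^ (2 * (n + 1))) := by rw [div_pow, ← pow_mul]; ring
    _ = _ := by rw [hqpow, hzpow, normalizedCoeff, thetaTerm]; ring

lemma summable_norm_thetaTerm {𝕜 : Type*} [NormedField 𝕜] {q z : 𝕜} (hq : ‖q‖ < 1) (hz : z ≠ 0) :
    Summable fun m => ‖thetaTerm q z m‖ := by
  have half : ∀ x : 𝕜, Summable fun n : ℕ => ‖q ^ n ^ 2 * x ^ n‖ := fun x => by
    have hlim : Tendsto (fun n : ℕ => ‖(q ^ 2) ^ n * (q * x)‖) atTop (𝓝 0) := by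
      have hq2 : ‖q ^ 2‖ < 1 := by
        rw [norm_pow]; exact pow_lt_one₀ (norm_nonneg q) hq two_ne_zero
      simpa only [norm_zero] using (tendsto_pow_mul_zero hq2 (q * x)).norm
    refine summable_of_ratio_norm_eventually_le one_half_lt_one ?_
    filter_upwards [hlim.eventually_le_const one_half_pos] with n hn
    rw [norm_norm, norm_norm]
    calc ‖q ^ (n + 1) ^ 2 * x ^ (n + 1)‖ = ‖(q ^ 2) ^ n * (q * x)‖ * ‖q ^ n ^ 2 * x ^ n‖ := by
          rw [← norm_mul]; ring_nf
      _ ≤ 1 / 2 * ‖q ^ n ^ 2 * x ^ n‖ := by gcongr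
  have hshift : ∀ m, ‖thetaTerm q z m‖ = ‖q ^ m ^ 2 * (z ^ 2) ^ m‖ * ‖z⁻¹‖ := fun m => by
    rw [thetaTerm, zpow_sub_one₀ hz, zpow_mul, ← norm_mul, mul_assoc, zpow_ofNat]
  simp only [hshift]
  refine Summable.mul_right _ (.of_nat_of_neg ((half (z ^ 2)).congr fun n => ?_)
    ((half (z ^ 2)⁻¹).congr fun n => ?_))
  · norm_cast
  · rw [neg_sq, zpow_neg, inv_pow]
    norm_cast

variable {𝕜 : Type*} [NormedField 𝕜] {q t z : 𝕜}

/-- The two-sided product with only the first `n + 1` of the factors in `z⁻¹`. -/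
noncomputable def truncatedProduct (q t : 𝕜) (n : ℕ) (z : 𝕜) : 𝕜 :=
  (∏ i ∈ Finset.range (n + 1), quadFactor t (q ^ i * z⁻¹)) * productSeries q t (q * z)

variable [CompleteSpace 𝕜]

/-- The factors `quadFactor t (q^i z⁻¹)` are, up to a monomial, the factors at `q^(-i) z` that
extend the product over `q^i z`, `i ≥ 1`, to smaller exponents. -/
lemma truncatedProduct_eq (hq0 : q ≠ 0) (hq : ‖q‖ < 1) (hz : z ≠ 0) (n : ℕ) :
    truncatedProduct q t n z =
      q ^ (n * (n + 1)) / z ^ (2 * (n + 1)) * productSeries q t (z / q ^ n) := by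
  induction n with
  | zero =>
    simp only [truncatedProduct, zero_add, Finset.prod_range_one, pow_zero, one_mul, div_one,
      quadFactor_inv t hz, productSeries_eq_quadFactor_mul hq z]
    ring
  | succ n ih =>
    have hfactor : quadFactor t (q ^ (n + 1) * z⁻¹) =
        quadFactor t (z / q ^ (n + 1)) / (z / q ^ (n + 1)) ^ 2 := by
      rw [← quadFactor_inv t (by positivity), inv_div, div_eq_mul_inv]
    have hseries : productSeries q t (z / q ^ (n + 1)) =
        quadFactor t (z / q ^ (n + 1)) * productSeries q t (z / q ^ n) := by
      have hscale : q * (z / q ^ (n + 1)) = z / q ^ n := by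
        rw [pow_succ', mul_div_assoc', mul_div_mul_left _ _ hq0]
      rw [productSeries_eq_quadFactor_mul hq (z / q ^ (n + 1)), hscale]
    calc truncatedProduct q t (n + 1) z
        = quadFactor t (q ^ (n + 1) * z⁻¹) * truncatedProduct q t n z := by
          rw [truncatedProduct, truncatedProduct, Finset.prod_range_succ]; ring
      _ = _ := by
          rw [hfactor, ih, hseries]
          field_simp
          ring

lemma hasSum_productSeries_odd (hq : ‖q‖ < 1) (x : 𝕜) :
    HasSum (fun K => 2 * (productCoeff q t (2 * K + 1) * x ^ (2 * K + 1)))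
      (productSeries q t x - productSeries q t (-x)) := by
  have hdiff := (hasSum_productSeries (t := t) hq x).sub (hasSum_productSeries (t := t) hq (-x))
  have hodd : Function.Injective fun K : ℕ => 2 * K + 1 := fun a b hab => by simpa using hab
  rw [← hodd.hasSum_iff fun n hn => ?_] at hdiff
  · have hterm : ∀ K, 2 * (productCoeff q t (2 * K + 1) * x ^ (2 * K + 1)) =
        productCoeff q t (2 * K + 1) * x ^ (2 * K + 1) -
          productCoeff q t (2 * K + 1) * (-x) ^ (2 * K + 1) := fun K => by
      rw [(odd_two_mul_add_one K).neg_pow]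
      ring
    exact (funext hterm).symm ▸ hdiff
  · have heven : Even n := Nat.not_odd_iff_even.1 fun ⟨K, hK⟩ => hn ⟨K, hK.symm⟩
    rw [heven.neg_pow, sub_self]

lemma hasSum_truncatedProduct_odd (hq0 : q ≠ 0) (hq : ‖q‖ < 1) (hz : z ≠ 0) (n : ℕ) :
    HasSum (fun K : ℕ => 2 * (normalizedCoeff q t K * thetaTerm q z (K - n)))
      (truncatedProduct q t n z - truncatedProduct q t n (-z)) := by
  have hterm : ∀ K : ℕ, 2 * (normalizedCoeff q t K * thetaTerm q z (K - n)) =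
      q ^ (n * (n + 1)) / z ^ (2 * (n + 1)) *
        (2 * (productCoeff q t (2 * K + 1) * (z / q ^ n) ^ (2 * K + 1))) := fun K => by
    rw [← mul_productCoeff_mul_pow_eq_thetaTerm hq0 hz, mul_left_comm]
  rw [truncatedProduct_eq hq0 hq hz, truncatedProduct_eq hq0 hq (neg_ne_zero.2 hz),
    (even_two_mul (n + 1)).neg_pow, neg_div, ← mul_sub]
  exact (funext hterm).symm ▸ (hasSum_productSeries_odd hq (z / q ^ n)).mul_left _

lemma tendsto_truncatedProduct (hq : ‖q‖ < 1) (z : 𝕜) :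
    Tendsto (fun n => truncatedProduct q t n z) atTop
      (𝓝 (∏' i : ℕ, quadFactor t (q ^ i * (q * z)) * quadFactor t (q ^ i * z⁻¹))) := by
  have hz := hasProd_quadFactor (t := t) hq (q * z)
  have hinv := hasProd_quadFactor (t := t) hq z⁻¹
  rw [hz.multipliable.tprod_mul hinv.multipliable, hz.tprod_eq, hinv.tprod_eq, mul_comm]
  exact ((tendsto_add_atTop_iff_nat 1).2 hinv.tendsto_prod_nat).mul_const _

lemma two_mul_tsum_thetaTerm (hq0 : q ≠ 0) (hq : ‖q‖ < 1) (hz : z ≠ 0) {L : 𝕜}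
    (hL : Tendsto (normalizedCoeff q t) atTop (𝓝 L)) :
    2 * L * ∑' m, thetaTerm q z m =
      (∏' i : ℕ, quadFactor t (q ^ i * (q * z)) * quadFactor t (q ^ i * z⁻¹)) -
      ∏' i : ℕ, quadFactor t (q ^ i * (q * -z)) * quadFactor t (q ^ i * (-z)⁻¹) := by
  have hodd := (tendsto_truncatedProduct (t := t) hq z).sub
    (tendsto_truncatedProduct (t := t) hq (-z))
  simp only [← (hasSum_truncatedProduct_odd hq0 hq hz _).tsum_eq, tsum_mul_left] at hodd
  have htheta := (tendsto_tsum_nat_mul_sub hL (summable_norm_thetaTerm hq hz)).const_mul 2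
  rw [tsum_mul_left, ← mul_assoc] at htheta
  exact tendsto_nhds_unique htheta hodd

/-- At `z = 1` the coefficient is one of the non-negative terms of a series whose sum,
`truncatedProduct q t K 1`, converges as `K → ∞`. -/
lemma bddAbove_range_normalizedCoeff {q t : ℝ} (hq0 : 0 < q) (hq1 : q < 1) (ht : 0 ≤ t) :
    BddAbove (Set.range (normalizedCoeff q t)) := by
  have hq : ‖q‖ < 1 := by rwa [Real.norm_of_nonneg hq0.le]
  obtain ⟨C, hC⟩ := (tendsto_truncatedProduct (t := t) hq 1).bddAbove_range
  refine ⟨C, Set.forall_mem_range.2 fun K => le_trans ?_ (hC ⟨K, rfl⟩)⟩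
  have hterm : productCoeff q t (2 * K + 1) * (1 / q ^ K) ^ (2 * K + 1) ≤
      productSeries q t (1 / q ^ K) :=
    le_hasSum (hasSum_productSeries hq (1 / q ^ K)) (2 * K + 1) fun n _ =>
      mul_nonneg (productCoeff_nonneg hq0.le hq1 ht n) (by positivity)
  calc normalizedCoeff q t K = q ^ (K * (K + 1)) / 1 ^ (2 * (K + 1)) *
          (productCoeff q t (2 * K + 1) * (1 / q ^ K) ^ (2 * K + 1)) := by
        rw [mul_productCoeff_mul_pow_eq_thetaTerm hq0.ne' one_ne_zero]
        simp [thetaTerm]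
    _ ≤ q ^ (K * (K + 1)) / 1 ^ (2 * (K + 1)) * productSeries q t (1 / q ^ K) := by gcongr
    _ = truncatedProduct q t K 1 := (truncatedProduct_eq hq0.ne' hq one_ne_zero K).symm

end TwoSided

/-! ### Words without two consecutive zeros -/

section Words

/-- The sign with which a letter contributes to the exponent of `t`. -/
def letterSign (a : ℕ) : ℤ := if a = 0 then -1 else 1

/-- The weight of the letter `a` in position `k`, which stands for the index `i = k + 1`. -/
def letterWeight {F : Type*} [Field F] (q t : F) (k a : ℕ) : F :=
  q ^ ((k + 1) * a) * t ^ letterSign a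

/-- The words of length `n` without two consecutive zeros. -/
def admissibleWords (n : ℕ) : Set (Fin n → ℕ) :=
  {v | ∀ k (hk : k + 1 < n), ¬(v ⟨k, by lia⟩ = 0 ∧ v ⟨k + 1, hk⟩ = 0)}

/-- The product of the weights of the letters of an admissible word; other words have weight zero,
which turns the sum over admissible words into a sum over a product of copies of `ℕ`. -/
noncomputable def wordWeight {F : Type*} [Field F] (q t : F) (n : ℕ) : (Fin n → ℕ) → F :=
  (admissibleWords n).indicator fun v => ∏ i : Fin n, letterWeight q t i (v i)

/-- The weight of a letter, restricted to non-zero letters. -/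
def nonzeroLetterWeight {F : Type*} [Field F] (q t : F) (k a : ℕ) : F :=
  if a = 0 then 0 else letterWeight q t k a

lemma mem_admissibleWords_of_last_ne_zero {n : ℕ} {v : Fin (n + 1) → ℕ} (h : v (Fin.last n) ≠ 0) :
    v ∈ admissibleWords (n + 1) ↔ Fin.init v ∈ admissibleWords n := by
  refine ⟨fun hv k hk => hv k (by lia), fun hv k hk => ?_⟩
  obtain hk' | rfl : k + 1 < n ∨ k + 1 = n := by lia
  · exact hv k hk'
  · exact fun hzero => h hzero.2

lemma mem_admissibleWords_of_last_eq_zero {n : ℕ} {v : Fin (n + 2) → ℕ}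
    (h : v (Fin.last (n + 1)) = 0) :
    v ∈ admissibleWords (n + 2) ↔
      Fin.init v (Fin.last n) ≠ 0 ∧ Fin.init v ∈ admissibleWords (n + 1) := by
  refine ⟨fun hv => ⟨fun h' => hv n (by lia) ⟨h', h⟩, fun k hk => hv k (by lia)⟩,
    fun hv k hk => ?_⟩
  obtain hk' | rfl : k + 1 < n + 1 ∨ k = n := by lia
  · exact hv.2 k hk'
  · exact fun hzero => hv.1 hzero.1

variable {F : Type*} [Field F] {q t : F} {n : ℕ}

lemma letterWeight_zero (k : ℕ) : letterWeight q t k 0 = t⁻¹ := by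
  simp [letterWeight, letterSign]

lemma nonzeroLetterWeight_zero (k : ℕ) : nonzeroLetterWeight q t k 0 = 0 := if_pos rfl

lemma nonzeroLetterWeight_succ (k a : ℕ) :
    nonzeroLetterWeight q t k (a + 1) = t * q ^ (k + 1) * (q ^ (k + 1)) ^ a := by
  simp only [nonzeroLetterWeight, letterWeight, letterSign, a.succ_ne_zero, if_false, zpow_one]
  ring

lemma letterWeight_eq_add (k a : ℕ) :
    letterWeight q t k a = nonzeroLetterWeight q t k a + (Pi.single 0 t⁻¹ : ℕ → F) a := by
  by_cases h : a = 0
  · simp [h, nonzeroLetterWeight, letterWeight_zero]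
  · simp [h, nonzeroLetterWeight]

lemma wordWeight_zero (v : Fin 0 → ℕ) : wordWeight q t 0 v = 1 := by
  rw [wordWeight, Set.indicator_of_mem fun k hk => absurd hk (Nat.not_lt_zero _),
    Fin.prod_univ_zero]

lemma wordWeight_one (v : Fin 1 → ℕ) :
    wordWeight q t 1 v = letterWeight q t 0 (v (Fin.last 0)) * wordWeight q t 0 (Fin.init v) := by
  rw [wordWeight_zero, mul_one, wordWeight, Set.indicator_of_mem fun k hk => absurd hk (by lia),
    Fin.prod_univ_one]
  rfl

lemma wordWeight_of_last_ne_zero {v : Fin (n + 1) → ℕ} (h : v (Fin.last n) ≠ 0) :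
    wordWeight q t (n + 1) v =
      letterWeight q t n (v (Fin.last n)) * wordWeight q t n (Fin.init v) := by
  by_cases hv : v ∈ admissibleWords (n + 1)
  · rw [wordWeight, wordWeight, Set.indicator_of_mem hv, Fin.prod_univ_castSucc, mul_comm,
      Set.indicator_of_mem ((mem_admissibleWords_of_last_ne_zero h).1 hv)]
    rfl
  · rw [wordWeight, wordWeight, Set.indicator_of_notMem hv,
      Set.indicator_of_notMem (mt (mem_admissibleWords_of_last_ne_zero h).2 hv), mul_zero]

lemma wordWeight_of_last_eq_zero {v : Fin (n + 2) → ℕ} (h : v (Fin.last (n + 1)) = 0) :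
    wordWeight q t (n + 2) v = t⁻¹ * (nonzeroLetterWeight q t n (Fin.init v (Fin.last n)) *
      wordWeight q t n (Fin.init (Fin.init v))) := by
  by_cases h' : Fin.init v (Fin.last n) = 0
  · rw [wordWeight, Set.indicator_of_notMem fun hv =>
      ((mem_admissibleWords_of_last_eq_zero h).1 hv).1 h']
    simp [nonzeroLetterWeight, h']
  · rw [nonzeroLetterWeight, if_neg h', ← wordWeight_of_last_ne_zero h', wordWeight, wordWeight]
    by_cases hv : v ∈ admissibleWords (n + 2)
    · rw [Set.indicator_of_mem hv, Fin.prod_univ_castSucc,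
        Set.indicator_of_mem ((mem_admissibleWords_of_last_eq_zero h).1 hv).2, mul_comm]
      change letterWeight q t (n + 1) (v (Fin.last (n + 1))) * _ = _
      rw [h, letterWeight_zero]
      rfl
    · rw [Set.indicator_of_notMem hv, Set.indicator_of_notMem fun hinit =>
        hv ((mem_admissibleWords_of_last_eq_zero h).2 ⟨h', hinit⟩), mul_zero]

lemma wordWeight_add_two (v : Fin (n + 2) → ℕ) :
    wordWeight q t (n + 2) v =
      nonzeroLetterWeight q t (n + 1) (v (Fin.last (n + 1))) *
          wordWeight q t (n + 1) (Fin.init v) +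
        (Pi.single 0 t⁻¹ : ℕ → F) (v (Fin.last (n + 1))) *
          (nonzeroLetterWeight q t n (Fin.init v (Fin.last n)) *
            wordWeight q t n (Fin.init (Fin.init v))) := by
  by_cases h : v (Fin.last (n + 1)) = 0
  · rw [wordWeight_of_last_eq_zero h, h, Pi.single_eq_same, nonzeroLetterWeight_zero,
      zero_mul, zero_add]
  · rw [wordWeight_of_last_ne_zero h, nonzeroLetterWeight, if_neg h, Pi.single_eq_of_ne h,
      zero_mul, add_zero]

end Words

section WordSums

variable {𝕜 : Type*} [NormedField 𝕜] {q t : 𝕜}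

lemma summable_norm_nonzeroLetterWeight (hq : ‖q‖ < 1) (k : ℕ) :
    Summable fun a => ‖nonzeroLetterWeight q t k a‖ := by
  have hqk : ‖q ^ (k + 1)‖ < 1 := by
    rw [norm_pow]; exact pow_lt_one₀ (norm_nonneg q) hq k.succ_ne_zero
  rw [← summable_nat_add_iff 1]
  simpa only [nonzeroLetterWeight_succ, norm_mul (t * q ^ (k + 1))] using
    (summable_norm_geometric_of_norm_lt_one hqk).mul_left ‖t * q ^ (k + 1)‖

lemma summable_norm_letterWeight (hq : ‖q‖ < 1) (k : ℕ) :
    Summable fun a => ‖letterWeight q t k a‖ := by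
  simp only [letterWeight_eq_add]
  exact .of_nonneg_of_le (fun a => norm_nonneg _) (fun a => norm_add_le _ _)
    ((summable_norm_nonzeroLetterWeight hq k).add (summable_norm_piSingle 0 t⁻¹))

lemma tsum_nonzeroLetterWeight (hq : ‖q‖ < 1) (k : ℕ) :
    ∑' a, nonzeroLetterWeight q t k a = t * q ^ (k + 1) / (1 - q ^ (k + 1)) := by
  have hqk : ‖q ^ (k + 1)‖ < 1 := by
    rw [norm_pow]; exact pow_lt_one₀ (norm_nonneg q) hq k.succ_ne_zero
  have htail := (hasSum_geometric_of_norm_lt_one hqk).mul_left (t * q ^ (k + 1))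
  simp only [← nonzeroLetterWeight_succ, ← div_eq_mul_inv] at htail
  have hsum := (hasSum_nat_add_iff 1).1 htail
  rw [Finset.sum_range_one, nonzeroLetterWeight_zero, add_zero] at hsum
  exact hsum.tsum_eq

lemma summable_norm_wordWeight (hq : ‖q‖ < 1) (n : ℕ) :
    Summable fun v => ‖wordWeight q t n v‖ := by
  induction n using Nat.twoStepInduction with
  | zero => exact .of_finite
  | one =>
    simp only [wordWeight_one]
    exact summable_norm_last_mul_init (summable_norm_letterWeight hq 0) .of_finite
  | more n ih₀ ih₁ =>
    have hnonzero := summable_norm_last_mul_init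
      (summable_norm_nonzeroLetterWeight (t := t) hq (n + 1)) ih₁
    have hzero := summable_norm_last_mul_init (summable_norm_piSingle (0 : ℕ) t⁻¹)
      (summable_norm_last_mul_init (summable_norm_nonzeroLetterWeight (t := t) hq n) ih₀)
    refine .of_nonneg_of_le (fun v => norm_nonneg _) (fun v => ?_) (hnonzero.add hzero)
    rw [wordWeight_add_two]
    exact norm_add_le _ _

variable [CompleteSpace 𝕜]

lemma tsum_wordWeight_add_two (hq : ‖q‖ < 1) (n : ℕ) :
    ∑' v, wordWeight q t (n + 2) v =
      t * q ^ (n + 2) / (1 - q ^ (n + 2)) * ∑' v, wordWeight q t (n + 1) v +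
        t⁻¹ * (t * q ^ (n + 1) / (1 - q ^ (n + 1)) * ∑' v, wordWeight q t n v) := by
  have hletter := summable_norm_nonzeroLetterWeight (t := t) hq
  have hword := summable_norm_wordWeight (t := t) hq
  have hnonzero := fun n => summable_norm_last_mul_init (hletter n) (hword n)
  have hzero := summable_norm_piSingle (0 : ℕ) t⁻¹
  simp only [wordWeight_add_two]
  rw [(hnonzero (n + 1)).of_norm.tsum_add
      (summable_norm_last_mul_init hzero (hnonzero n)).of_norm,
    tsum_last_mul_init (hletter (n + 1)) (hword (n + 1)), tsum_last_mul_init hzero (hnonzero n),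
    tsum_last_mul_init (hletter n) (hword n), tsum_pi_single, tsum_nonzeroLetterWeight hq,
    tsum_nonzeroLetterWeight hq]

lemma tsum_wordWeight (hq : ‖q‖ < 1) (ht : t ≠ 0) :
    ∀ n, ∑' v, wordWeight q t n v = (1 - q ^ (n + 1)) * productCoeff q t (n + 1) / t
  | 0 => by
    rw [zero_add, pow_one, one_sub_mul_productCoeff_one hq, div_self ht,
      tsum_eq_single default fun v hv => absurd (Subsingleton.elim v _) hv, wordWeight_zero]
  | 1 => by
    have hq1 := one_sub_pow_succ_ne_zero hq 0
    have hletter : ∑' a, letterWeight q t 0 a = t * q ^ (0 + 1) / (1 - q ^ (0 + 1)) + t⁻¹ := by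
      simp only [letterWeight_eq_add]
      rw [(summable_norm_nonzeroLetterWeight hq 0).of_norm.tsum_add
        (summable_norm_piSingle 0 t⁻¹).of_norm, tsum_nonzeroLetterWeight hq, tsum_pi_single]
    simp only [wordWeight_one]
    rw [tsum_last_mul_init (summable_norm_letterWeight hq 0) (summable_norm_wordWeight hq 0),
      tsum_wordWeight hq ht 0, hletter, one_sub_pow_mul_productCoeff hq 0]
    simp only [productCoeff, zero_add, pow_one, pow_zero] at hq1 ⊢
    field_simp
  | n + 2 => by
    have h₁ := one_sub_pow_succ_ne_zero hq n
    have h₂ := one_sub_pow_succ_ne_zero hq (n + 1)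
    rw [tsum_wordWeight_add_two hq, tsum_wordWeight hq ht (n + 1), tsum_wordWeight hq ht n,
      one_sub_pow_mul_productCoeff hq (n + 1)]
    field_simp

end WordSums

/-! ### Summation over `Ho` -/

section GroundState

/-- The sequence `1, 0, 1, 0, …` with which the elements of `Ho` eventually agree. -/
def ground (n : ℕ) : ℕ := if (n + 1) % 2 = 1 then 1 else 0

lemma ground_two_mul (K : ℕ) : ground (2 * K) = 1 := if_pos (by lia)

lemma ground_two_mul_add_one (K : ℕ) : ground (2 * K + 1) = 0 := if_neg (by lia)

lemma sum_mul_ground (K : ℕ) :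
    ∑ n ∈ Finset.range (2 * K), ((n : ℤ) + 1) * ground n = (K : ℤ) ^ 2 := by
  induction K with
  | zero => simp
  | succ K ih =>
    rw [show 2 * (K + 1) = 2 * K + 1 + 1 by ring, Finset.sum_range_succ, Finset.sum_range_succ, ih]
    rw [ground_two_mul, ground_two_mul_add_one]
    push_cast
    ring

lemma sum_letterSign_ground (K : ℕ) : ∑ n ∈ Finset.range (2 * K), letterSign (ground n) = 0 := by
  induction K with
  | zero => simp
  | succ K ih =>
    rw [show 2 * (K + 1) = 2 * K + 1 + 1 by ring, Finset.sum_range_succ, Finset.sum_range_succ, ih]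
    rw [ground_two_mul, ground_two_mul_add_one]
    rfl

lemma finsum_eq_sum_range {M : Type*} [AddCommMonoid M] {f : ℕ → M} {N : ℕ}
    (hf : ∀ n ≥ N, f n = 0) : ∑ᶠ n, f n = ∑ n ∈ Finset.range N, f n :=
  finsum_eq_sum_of_support_subset f fun n hn => by
    by_contra h
    exact hn (hf n (by simpa using h))

variable {K : ℕ} {ω : ℕ → ℕ}

lemma A'fun_eq_sum_sub (hω : ∀ n ≥ 2 * K, ω n = ground n) :
    A'fun ω = ∑ n ∈ Finset.range (2 * K), ((n : ℤ) + 1) * ω n - (K : ℤ) ^ 2 := by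
  have hterm : ∀ n : ℕ, (if (n + 1) % 2 = 0 then ((n : ℤ) + 1) * (ω n : ℤ)
      else ((n : ℤ) + 1) * ((ω n : ℤ) - 1)) = ((n : ℤ) + 1) * ω n - ((n : ℤ) + 1) * ground n := by
    intro n
    rcases Nat.mod_two_eq_zero_or_one (n + 1) with h | h <;> simp [ground, h, mul_sub]
  rw [A'fun, ← sum_mul_ground, ← Finset.sum_sub_distrib]
  simp only [hterm]
  exact finsum_eq_sum_range fun n hn => by rw [hω n hn, sub_self]

lemma B'fun_eq_sum (hω : ∀ n ≥ 2 * K, ω n = ground n) :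
    B'fun ω = ∑ n ∈ Finset.range (2 * K), letterSign (ω n) := by
  have hterm : ∀ n, 2 * ((if (n + 1) % 2 = 0 ∧ 1 ≤ ω n then (1 : ℤ) else 0) -
      if (n + 1) % 2 = 1 ∧ ω n = 0 then (1 : ℤ) else 0) =
      letterSign (ω n) - letterSign (ground n) := by
    intro n
    rcases Nat.mod_two_eq_zero_or_one (n + 1) with h | h <;>
      by_cases h₀ : ω n = 0 <;> simp [ground, letterSign, h, h₀, Nat.one_le_iff_ne_zero]
  rw [B'fun, finsum_eq_sum_range (N := 2 * K), finsum_eq_sum_range (N := 2 * K),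
    ← Finset.sum_sub_distrib, Finset.mul_sum, Finset.sum_congr rfl fun n _ => hterm n,
    Finset.sum_sub_distrib, sum_letterSign_ground, sub_zero]
  all_goals
    intro n hn
    rw [hω n hn]
    rcases Nat.mod_two_eq_zero_or_one (n + 1) with h | h <;> simp [ground, h]

lemma zpow_sum {ι F : Type*} [CommGroupWithZero F] {a : F} (ha : a ≠ 0) (s : Finset ι) (f : ι → ℤ) :
    a ^ ∑ i ∈ s, f i = ∏ i ∈ s, a ^ f i := by
  classical
  induction s using Finset.induction_on with
  | empty => simp
  | insert i s hi ih => rw [Finset.sum_insert hi, Finset.prod_insert hi, zpow_add₀ ha, ih]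

/-- The summand of the series `Sodd`. -/
noncomputable def weight {F : Type*} [Field F] (q t : F) (ω : ℕ → ℕ) : F :=
  q ^ A'fun ω * t ^ B'fun ω

lemma weight_eq_prod_div {F : Type*} [Field F] {q t : F} (hq : q ≠ 0) (ht : t ≠ 0)
    (hω : ∀ n ≥ 2 * K, ω n = ground n) :
    weight q t ω = (∏ i : Fin (2 * K), letterWeight q t i (ω i)) / q ^ K ^ 2 := by
  rw [weight, A'fun_eq_sum_sub hω, B'fun_eq_sum hω, zpow_sub₀ hq, zpow_sum ht,
    Fin.prod_univ_eq_prod_range (fun n => letterWeight q t n (ω n))]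
  simp only [letterWeight, Finset.prod_mul_distrib, Finset.prod_pow_eq_pow_sum]
  rw [div_mul_eq_mul_div]
  norm_cast

end GroundState

section Levels

/-- The elements of `Ho` that agree with the ground state from position `2K` on. -/
def level (K : ℕ) : Set Ho := {ω | ∀ n ≥ 2 * K, ω.1 n = ground n}

lemma eventually_mem_level (ω : Ho) : ∀ᶠ K in atTop, ω ∈ level K := by
  obtain ⟨_, _, N, hN⟩ := ω
  filter_upwards [eventually_ge_atTop N] with K hK n hn using hN n (by lia)

/-- The first `2K` letters of an element of `level K`. -/
def levelWord (K : ℕ) (ω : level K) : admissibleWords (2 * K) :=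
  ⟨fun i => ω.1.1 i, fun k _ => ω.1.2.1 k⟩

/-- After an even number of letters the ground state continues with a one, so every admissible word
extended by it is admissible. -/
lemma bijective_levelWord (K : ℕ) : Function.Bijective (levelWord K) := by
  refine ⟨fun ω ω' h => ?_, fun v => ?_⟩
  · refine Subtype.ext (Subtype.ext (funext fun n => ?_))
    rcases lt_or_ge n (2 * K) with hn | hn
    · exact congrFun (congrArg Subtype.val h) ⟨n, hn⟩
    · rw [ω.2 n hn, ω'.2 n hn]
  · let ω : ℕ → ℕ := fun n => if h : n < 2 * K then v.1 ⟨n, h⟩ else ground n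
    have htail : ∀ n ≥ 2 * K, ω n = ground n := fun n hn => dif_neg hn.not_gt
    have hadm : ∀ n, ¬(ω n = 0 ∧ ω (n + 1) = 0) := by
      intro n
      rcases lt_or_ge (n + 1) (2 * K) with hn | hn
      · simpa only [ω, dif_pos hn, dif_pos (Nat.lt_of_succ_lt hn)] using v.2 n hn
      rintro ⟨h₀, h₁⟩
      rw [htail _ hn] at h₁
      obtain ⟨m, rfl | rfl⟩ := n.even_or_odd'
      · rw [htail _ (by lia), ground_two_mul] at h₀
        exact one_ne_zero h₀
      · rw [← mul_add_one 2 m, ground_two_mul] at h₁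
        exact one_ne_zero h₁
    exact ⟨⟨⟨ω, hadm, 2 * K, htail⟩, htail⟩, Subtype.ext (funext fun i => dif_pos i.2)⟩

variable {𝕜 : Type*} [NormedField 𝕜] {q t : 𝕜}

lemma weight_level (hq : q ≠ 0) (ht : t ≠ 0) {K : ℕ} (ω : level K) :
    weight q t ω.1 = wordWeight q t (2 * K) (levelWord K ω) / q ^ K ^ 2 := by
  rw [weight_eq_prod_div hq ht ω.2, wordWeight, Set.indicator_of_mem (levelWord K ω).2]
  rfl

lemma summable_norm_weight_level (hq0 : q ≠ 0) (hq : ‖q‖ < 1) (ht : t ≠ 0) (K : ℕ) :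
    Summable fun ω : level K => ‖weight q t ω.1‖ := by
  simp only [weight_level hq0 ht, norm_div]
  exact ((summable_norm_wordWeight hq (2 * K)).comp_injective
    (Subtype.val_injective.comp (bijective_levelWord K).injective)).div_const _

lemma tsum_weight_level [CompleteSpace 𝕜] (hq0 : q ≠ 0) (hq : ‖q‖ < 1) (ht : t ≠ 0) (K : ℕ) :
    ∑' ω : level K, weight q t ω.1 = (1 - q ^ (2 * K + 1)) * normalizedCoeff q t K / t := by
  have hindicator : ∑' v : admissibleWords (2 * K), wordWeight q t (2 * K) v =
      ∑' v, wordWeight q t (2 * K) v := by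
    rw [tsum_subtype, wordWeight, Set.indicator_indicator, Set.inter_self]
  simp only [weight_level hq0 ht, tsum_div_const]
  have hword : ∑' ω, wordWeight q t (2 * K) (levelWord K ω) =
      ∑' v : admissibleWords (2 * K), wordWeight q t (2 * K) v :=
    (Equiv.ofBijective _ (bijective_levelWord K)).tsum_eq
      fun v : admissibleWords (2 * K) => wordWeight q t (2 * K) v
  rw [hword, hindicator, tsum_wordWeight hq ht, normalizedCoeff]
  ring

lemma norm_weight (ω : ℕ → ℕ) : ‖weight q t ω‖ = weight ‖q‖ ‖t‖ ω := by
  rw [weight, weight, norm_mul, norm_zpow, norm_zpow]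

lemma summable_norm_weight (hq0 : q ≠ 0) (hq : ‖q‖ < 1) (ht : t ≠ 0) :
    Summable fun ω : Ho => ‖weight q t ω‖ := by
  have hq0' := norm_pos_iff.2 hq0
  have ht' := norm_pos_iff.2 ht
  obtain ⟨C, hC⟩ := bddAbove_range_normalizedCoeff hq0' hq ht'.le
  refine summable_of_tsum_subtype_le (fun ω => norm_nonneg _) eventually_mem_level
    (summable_norm_weight_level hq0 hq ht) (C := C / ‖t‖) fun K => ?_
  simp only [norm_weight]
  rw [tsum_weight_level hq0'.ne' (by rwa [norm_norm]) ht'.ne']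
  gcongr
  have hcoeff : 0 ≤ normalizedCoeff ‖q‖ ‖t‖ K :=
    div_nonneg (productCoeff_nonneg hq0'.le hq ht'.le _) (by positivity)
  exact (mul_le_of_le_one_left hcoeff (sub_le_self 1 (by positivity))).trans (hC ⟨K, rfl⟩)

variable [CompleteSpace 𝕜]

lemma tendsto_normalizedCoeff (hq0 : q ≠ 0) (hq : ‖q‖ < 1) (ht : t ≠ 0) :
    Tendsto (normalizedCoeff q t) atTop (𝓝 (t * ∑' ω : Ho, weight q t ω)) := by
  have hlevel := tendsto_tsum_subtype (f := fun ω : Ho => weight q t ω)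
    (summable_norm_weight hq0 hq ht) eventually_mem_level
  have hden : Tendsto (fun K : ℕ => 1 - q ^ (2 * K + 1)) atTop (𝓝 1) := by
    have hindex : Tendsto (fun K : ℕ => 2 * K + 1) atTop atTop :=
      tendsto_atTop_mono (fun K => (by lia : K ≤ 2 * K + 1)) tendsto_id
    simpa using ((tendsto_pow_atTop_nhds_zero_of_norm_lt_one hq).comp hindex).const_sub 1
  have hlim := (hlevel.const_mul t).div hden one_ne_zero
  rw [div_one] at hlim
  refine hlim.congr fun K => ?_
  have hK := one_sub_pow_succ_ne_zero hq (2 * K)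
  rw [Pi.div_apply, tsum_weight_level hq0 hq ht]
  field_simp

end Levels

end OddTheta

open OddTheta in
theorem statement1_general {𝕜 : Type*} [NormedField 𝕜] [CompleteSpace 𝕜] {q t z : 𝕜}
    (hq0 : q ≠ 0) (hq : ‖q‖ < 1) (ht : t ≠ 0) (hz : z ≠ 0) :
    Summable (fun ω : Ho => q ^ A'fun ω.1 * t ^ B'fun ω.1) ∧
    Summable (fun ℓ : ℤ => q ^ ((ℓ + 1) ^ 2) * z ^ (2 * ℓ + 1)) ∧
    Multipliable (fun i : ℕ =>
      (1 + t * z * q ^ (i + 1) + z ^ 2 * q ^ (2 * (i + 1))) *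
      (1 + t * z⁻¹ * q ^ i + z⁻¹ ^ 2 * q ^ (2 * i))) ∧
    Multipliable (fun i : ℕ =>
      (1 - t * z * q ^ (i + 1) + z ^ 2 * q ^ (2 * (i + 1))) *
      (1 - t * z⁻¹ * q ^ i + z⁻¹ ^ 2 * q ^ (2 * i))) ∧
    2 * t * (∑' ω : Ho, q ^ A'fun ω.1 * t ^ B'fun ω.1) *
        (∑' ℓ : ℤ, q ^ ((ℓ + 1) ^ 2) * z ^ (2 * ℓ + 1)) =
      (∏' i : ℕ, (1 + t * z * q ^ (i + 1) + z ^ 2 * q ^ (2 * (i + 1))) *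
        (1 + t * z⁻¹ * q ^ i + z⁻¹ ^ 2 * q ^ (2 * i))) -
      (∏' i : ℕ, (1 - t * z * q ^ (i + 1) + z ^ 2 * q ^ (2 * (i + 1))) *
        (1 - t * z⁻¹ * q ^ i + z⁻¹ ^ 2 * q ^ (2 * i))) := by
  have hθ : ∀ ℓ : ℤ, thetaTerm q z (ℓ + 1) = q ^ ((ℓ + 1) ^ 2) * z ^ (2 * ℓ + 1) := fun ℓ => by
    rw [thetaTerm, show 2 * (ℓ + 1) - 1 = 2 * ℓ + 1 by ring]
  have hplus : ∀ i : ℕ, quadFactor t (q ^ i * (q * z)) * quadFactor t (q ^ i * z⁻¹) =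
      (1 + t * z * q ^ (i + 1) + z ^ 2 * q ^ (2 * (i + 1))) *
        (1 + t * z⁻¹ * q ^ i + z⁻¹ ^ 2 * q ^ (2 * i)) := fun i => by
    rw [quadFactor, quadFactor]; ring
  have hminus : ∀ i : ℕ, quadFactor t (q ^ i * (q * -z)) * quadFactor t (q ^ i * (-z)⁻¹) =
      (1 - t * z * q ^ (i + 1) + z ^ 2 * q ^ (2 * (i + 1))) *
        (1 - t * z⁻¹ * q ^ i + z⁻¹ ^ 2 * q ^ (2 * i)) := fun i => by
    rw [quadFactor, quadFactor, inv_neg]; ring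
  have hmul := fun x : 𝕜 => (multipliable_quadFactor (t := t) hq (q * x)).mul
    (multipliable_quadFactor (t := t) hq x⁻¹)
  have hidentity := two_mul_tsum_thetaTerm hq0 hq hz (tendsto_normalizedCoeff hq0 hq ht)
  rw [← (Equiv.addRight (1 : ℤ)).tsum_eq, ← mul_assoc] at hidentity
  simp only [Equiv.coe_addRight, hθ, hplus, hminus] at hidentity
  refine ⟨(summable_norm_weight hq0 hq ht).of_norm, ?_, (hmul z).congr hplus,
    (hmul (-z)).congr hminus, hidentity⟩
  exact (((Equiv.addRight (1 : ℤ)).summable_iff.2 (summable_norm_thetaTerm hq hz).of_norm)).congr hθ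

theorem statement1 (q t z : ℝ) (hq0 : 0 < q) (hq1 : q < 1) (ht : 1 ≤ t) (hz : 0 < z) :
    Summable (fun ℓ : ℤ => q ^ ((ℓ + 1) ^ 2) * z ^ (2 * ℓ + 1)) ∧
    Multipliable (fun i : ℕ =>
      (1 + t * z * q ^ (i + 1) + z ^ 2 * q ^ (2 * (i + 1))) *
      (1 + t * z⁻¹ * q ^ i + z⁻¹ ^ 2 * q ^ (2 * i))) ∧
    Multipliable (fun i : ℕ =>
      (1 - t * z * q ^ (i + 1) + z ^ 2 * q ^ (2 * (i + 1))) *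
      (1 - t * z⁻¹ * q ^ i + z⁻¹ ^ 2 * q ^ (2 * i))) ∧
    2 * t * Sodd q t * (∑' ℓ : ℤ, q ^ ((ℓ + 1) ^ 2) * z ^ (2 * ℓ + 1)) =
      (∏' i : ℕ, (1 + t * z * q ^ (i + 1) + z ^ 2 * q ^ (2 * (i + 1))) *
        (1 + t * z⁻¹ * q ^ i + z⁻¹ ^ 2 * q ^ (2 * i))) -
      (∏' i : ℕ, (1 - t * z * q ^ (i + 1) + z ^ 2 * q ^ (2 * (i + 1))) *
        (1 - t * z⁻¹ * q ^ i + z⁻¹ ^ 2 * q ^ (2 * i))) :=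
  (statement1_general hq0.ne' (by rwa [Real.norm_of_nonneg hq0.le]) (by linarith) hz.ne').2
end

section
/- Let k ≥ 1 and 0 ≤ m ≤ k−1 be integers, let 0 < q < 1 and z ≠ 0 be real numbers, and let ζ_k = exp(2πi/k) ∈ ℂ. Then the following identity holds in ℂ: k·S^{(k)}_{-m}(q)·Σ_{ℓ∈ℤ} q^{kℓ(ℓ+1)/2 − mℓ} z^{kℓ−m} = Σ_{r=0}^{k−1} ζ_k^{−rm} · Π_{i≥1} (Σ_{α=0}^{k} ζ_k^{−αr} q^{αi} z^{α}) · (Σ_{α=0}^{k} ζ_k^{αr} q^{α(i−1)} z^{−α}), where the sum over ℓ and the infinite products converge absolutely. -/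
/-!
The entire function `wordSeries k q x = ∑ₙ wordCoeff k q n * x ^ n` satisfies
`wordSeries k q x = truncGeom k (q * x) * wordSeries k q (q * x)`, hence equals
`∏_{i ≥ 1} truncGeom k (q ^ i * x)`, where `truncGeom k y = 1 + y + ⋯ + y ^ k`.

**Combinatorics.** The coefficient `wordCoeff k q n` is the sum of `q ^ (∑_{j<n} (j + 1) * ν j)`
over the words `ν 0, …, ν (n - 1)` without `k` consecutive zeros and with `ν (n - 1) ≠ 0`. A
nonempty such word ends in a block of fewer than `k` zeros followed by a positive entry, and
removing this block yields a recursion that is equivalent to the functional equation. For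
`n = k * N + m`, continuing the words by the ground state gives exactly the elements of `Hkm k m`
that agree with the ground state from index `n` on. The normalized coefficients
`wordCoeff k q (k * N + m) / q ^ groundWeight k m N` are thus partial sums of the series defining
`stateSum k m q`, and converge to it once they are known to be bounded with `‖q‖` in place of `q`.

**Analysis.** For `w ≠ 0`, iterating the functional equation and using
`y ^ k * truncGeom k y⁻¹ = truncGeom k y` gives
`∏_{i=1}^N (q ^ i * w) ^ k * wordSeries k q (q ^ (N + 1) * w)⁻¹
  = ∏_{i=1}^N truncGeom k (q ^ i * w) * wordSeries k q (q * w)⁻¹`.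
As `N → ∞` the right side tends to
`∏_{i ≥ 1} truncGeom k (q ^ i * w) * truncGeom k (q ^ (i - 1) * w⁻¹)`. On the left side, the term
of index `n = k * M + m` of the power series equals the `M`-th partial sum of `stateSum k m q`
times the theta term of index `ℓ = N - M`. At `w = 1` and `M = N` this bounds the partial sums; in
general, Tannery's theorem in each residue class `m` gives
`∏_{i ≥ 1} truncGeom k (q ^ i * w) * truncGeom k (q ^ (i - 1) * w⁻¹)
  = ∑_{m<k} stateSum k m q * ∑_ℓ thetaTerm k m q w ℓ`.

Taking `w = ζ ^ (-r) * z` multiplies the theta series of class `j` by `ζ ^ (r * j)`, and the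
orthogonality of the `k`-th roots of unity isolates the class `m`.
-/

open scoped BigOperators

/-- `Hkm k m` is the set of sequences `(ω_{-i})_{i ≥ 1}` of non-negative integers (indexed here
by `n : ℕ` with `i = n + 1`) having no `k` consecutive zero entries and such that for all
sufficiently large `i`, `ω_{-i} = 1` if `i ≡ m (mod k)` and `ω_{-i} = 0` otherwise. -/
def Hkm (k m : ℕ) : Set (ℕ → ℕ) :=
  {ω | (¬∃ n : ℕ, ∀ j < k, ω (n + j) = 0) ∧
       (∃ N : ℕ, ∀ n ≥ N, ω n = if (n + 1) % k = m then 1 else 0)}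

/-- `W(ω) = Σ_{i ≢ m (mod k)} i·ω_{-i} + Σ_{i ≡ m (mod k)} i·(ω_{-i} − 1)`. -/
noncomputable def Wfun (k m : ℕ) (ω : ℕ → ℕ) : ℤ :=
  ∑ᶠ n : ℕ, (if (n + 1) % k = m then ((n : ℤ) + 1) * ((ω n : ℤ) - 1)
             else ((n : ℤ) + 1) * (ω n : ℤ))

/-- `S^{(k)}_{-m}(q) = Σ_{ω ∈ H_km} q^{W(ω)}`. -/
noncomputable def Sk (k m : ℕ) (q : ℝ) : ℝ := ∑' ω : Hkm k m, q ^ Wfun k m ω.1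

/-- `ζ_k = exp(2πi/k)`. -/
noncomputable def zetaC (k : ℕ) : ℂ := Complex.exp (2 * Real.pi * Complex.I / k)

open Filter Finset Topology

/-! ### Series and limits -/

theorem sum_range_sum_Icc_le {u : ℕ → ℝ} (hu : ∀ n, 0 ≤ u n) (k M : ℕ) :
    ∑ n ∈ range M, ∑ j ∈ Icc (n - k) n, u j ≤ (k + 1) * ∑ j ∈ range M, u j := by
  calc ∑ n ∈ range M, ∑ j ∈ Icc (n - k) n, u j
      = ∑ j ∈ range M, ∑ n ∈ range M with n ∈ Icc j (j + k), u j := by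
        refine sum_comm' fun n j => ?_
        simp only [mem_range, mem_Icc, mem_filter]
        omega
    _ ≤ ∑ j ∈ range M, (k + 1) * u j := by
        refine sum_le_sum fun j _ => ?_
        have hcard : #{n ∈ range M | n ∈ Icc j (j + k)} ≤ k + 1 := by
          calc #{n ∈ range M | n ∈ Icc j (j + k)} ≤ #(Icc j (j + k)) :=
                card_le_card fun n hn => (mem_filter.1 hn).2
            _ = k + 1 := by rw [Nat.card_Icc]; omega
        rw [sum_const, nsmul_eq_mul]
        exact mul_le_mul_of_nonneg_right (mod_cast hcard) (hu j)
    _ = (k + 1) * ∑ j ∈ range M, u j := (mul_sum ..).symm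

theorem summable_of_le_mul_sum_Icc {u c : ℕ → ℝ} {k : ℕ} (hu : ∀ n, 0 ≤ u n)
    (hc : Tendsto c atTop (𝓝 0)) (h : ∀ n, u n ≤ c n * ∑ j ∈ Icc (n - k) n, u j) :
    Summable u := by
  set ε : ℝ := (2 * (k + 1))⁻¹ with hε
  have hε0 : 0 < ε := by positivity
  obtain ⟨n₀, hn₀⟩ := eventually_atTop.1 (hc.eventually_le_const hε0)
  have hwin (n : ℕ) : 0 ≤ ∑ j ∈ Icc (n - k) n, u j := sum_nonneg fun j _ => hu j
  have hpt (n : ℕ) : u n ≤ (if n < n₀ then u n else 0) + ε * ∑ j ∈ Icc (n - k) n, u j := by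
    split_ifs with hn
    · exact le_add_of_nonneg_right (mul_nonneg hε0.le (hwin n))
    · rw [zero_add]
      exact (h n).trans (mul_le_mul_of_nonneg_right (hn₀ n (not_lt.1 hn)) (hwin n))
  have hhead (M : ℕ) : ∑ n ∈ range M, (if n < n₀ then u n else 0) ≤ ∑ n ∈ range n₀, u n := by
    rw [← sum_filter]
    exact sum_le_sum_of_subset_of_nonneg
      (fun n hn => mem_range.2 (mem_filter.1 hn).2) fun n _ _ => hu n
  refine summable_of_sum_range_le (c := 2 * ∑ n ∈ range n₀, u n) hu fun M => ?_
  have hsum : ∑ n ∈ range M, u n ≤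
      ∑ n ∈ range n₀, u n + ε * ((k + 1) * ∑ n ∈ range M, u n) := by
    calc ∑ n ∈ range M, u n
        ≤ ∑ n ∈ range M, ((if n < n₀ then u n else 0) + ε * ∑ j ∈ Icc (n - k) n, u j) :=
          sum_le_sum fun n _ => hpt n
      _ ≤ ∑ n ∈ range n₀, u n + ε * ((k + 1) * ∑ n ∈ range M, u n) := by
          rw [sum_add_distrib, ← mul_sum]
          gcongr
          · exact hhead M
          · exact sum_range_sum_Icc_le hu k M
  have hhalf : ε * ((k + 1) * ∑ n ∈ range M, u n) = (∑ n ∈ range M, u n) / 2 := by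
    rw [hε]; field_simp
  linarith

theorem summable_subtype_of_tsum_le {β : Type*} {H : Set β} {T : ℕ → Set β} {f : β → ℝ} {C : ℝ}
    (hT : ∀ ω ∈ H, ∀ᶠ N in atTop, ω ∈ T N) (hf : ∀ ω, 0 ≤ f ω)
    (hs : ∀ N, Summable fun ω : T N => f ω) (hC : ∀ N, ∑' ω : T N, f ω ≤ C) :
    Summable fun ω : H => f ω := by
  refine summable_of_sum_le (c := C) (fun ω => hf ω) fun u => ?_
  obtain ⟨N, hN⟩ := ((eventually_all_finset u).2 fun ω _ => hT ω ω.2).exists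
  calc ∑ ω ∈ u, f ω = ∑ ω ∈ u.map (.subtype _), (T N).indicator f ω := by
        rw [sum_map]
        exact sum_congr rfl fun ω hω => (Set.indicator_of_mem (hN ω hω) f).symm
    _ ≤ ∑' ω, (T N).indicator f ω :=
        (summable_subtype_iff_indicator.1 (hs N)).sum_le_tsum _
          fun ω _ => Set.indicator_nonneg (fun ω _ => hf ω) ω
    _ ≤ C := (_root_.tsum_subtype (T N) f).symm.trans_le (hC N)

theorem tendsto_tsum_subtype {β E : Type*} [NormedAddCommGroup E] [CompleteSpace E]
    {H : Set β} {T : ℕ → Set β} {f : β → E} (hTH : ∀ N, T N ⊆ H)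
    (hT : ∀ ω ∈ H, ∀ᶠ N in atTop, ω ∈ T N) (hf : Summable fun ω : H => ‖f ω‖) :
    Tendsto (fun N => ∑' ω : T N, f ω) atTop (𝓝 (∑' ω : H, f ω)) := by
  simp only [_root_.tsum_subtype]
  refine tendsto_tsum_of_dominated_convergence
    (summable_subtype_iff_indicator (f := fun ω => ‖f ω‖).1 hf) (fun ω => ?_)
    (Eventually.of_forall fun N ω => ?_)
  · refine tendsto_const_nhds.congr' ?_
    by_cases hω : ω ∈ H
    · filter_upwards [hT ω hω] with N hN
      rw [Set.indicator_of_mem hω, Set.indicator_of_mem hN]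
    · filter_upwards with N
      rw [Set.indicator_of_notMem hω, Set.indicator_of_notMem fun h => hω (hTH N h)]
  · rw [norm_indicator_eq_indicator_norm]
    exact Set.indicator_le_indicator_of_subset (hTH N) (fun _ => norm_nonneg _) ω

/-- Tannery's theorem after the substitution `ℓ = N - M`. -/
theorem tendsto_tsum_mul_int_sub {R : Type*} [NormedRing R] [CompleteSpace R] {b : ℕ → R} {S : R}
    {θ : ℤ → R} (hb : Tendsto b atTop (𝓝 S)) (hθ : Summable fun ℓ => ‖θ ℓ‖) :
    Tendsto (fun N : ℕ => ∑' M : ℕ, b M * θ (N - M)) atTop (𝓝 (S * ∑' ℓ, θ ℓ)) := by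
  obtain ⟨C, hC⟩ := hb.norm.bddAbove_range
  have hsub (N : ℕ) : ∑' M : ℕ, b M * θ (N - M) =
      ∑' ℓ : ℤ, if ℓ ≤ N then b (N - ℓ).toNat * θ ℓ else 0 := by
    have hinj : Function.Injective fun M : ℕ => (N : ℤ) - M := fun M M' h => by simpa using h
    rw [← hinj.tsum_eq]
    · refine tsum_congr fun M => ?_
      rw [if_pos (by omega), sub_sub_cancel, Int.toNat_natCast]
    · intro ℓ hℓ
      have hle : ℓ ≤ N := by
        by_contra h
        simp [h] at hℓ
      exact ⟨(N - ℓ).toNat, by simp only; omega⟩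
  simp_rw [hsub]
  rw [← hθ.of_norm.tsum_mul_left]
  refine tendsto_tsum_of_dominated_convergence (hθ.mul_left C) (fun ℓ => ?_)
    (Eventually.of_forall fun N ℓ => ?_)
  · have hindex : Tendsto (fun N : ℕ => ((N : ℤ) - ℓ).toNat) atTop atTop :=
      tendsto_atTop.2 fun n => by
        filter_upwards [eventually_ge_atTop (n + ℓ.toNat)] with N hN
        omega
    refine ((hb.comp hindex).mul_const (θ ℓ)).congr' ?_
    filter_upwards [eventually_ge_atTop ℓ.toNat] with N hN
    rw [if_pos (by omega), Function.comp_apply]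
  · split_ifs
    · exact (norm_mul_le _ _).trans (mul_le_mul_of_nonneg_right (hC ⟨_, rfl⟩) (norm_nonneg _))
    · rw [norm_zero]
      exact mul_nonneg ((norm_nonneg (b 0)).trans (hC ⟨0, rfl⟩)) (norm_nonneg _)

/-! ### Words without long runs of zeros -/

/-- The words of length `n` without `k` consecutive zeros and without a final zero, as functions on
`ℕ` extended by zero. Since they vanish from `n` on, both conditions together say that every window
of length `k` starting before `n` contains a non-zero entry. -/
def gapWords (k n : ℕ) : Set (ℕ →₀ ℕ) :=
  {ν | (∀ j ≥ n, ν j = 0) ∧ ∀ s < n, ∃ j ∈ Set.Ico s (s + k), ν j ≠ 0}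

/-- The weight `∑ (j + 1) * ν j` of a word. -/
noncomputable def wordWeight : (ℕ →₀ ℕ) →+ ℕ := Finsupp.weight (· + 1)

theorem gapWords_zero (k : ℕ) : gapWords k 0 = {0} := by
  ext ν
  simp [gapWords, DFunLike.ext_iff]

theorem pairwise_disjoint_gapWords (k : ℕ) : Pairwise (Function.onFun Disjoint (gapWords k)) := by
  refine (Std.Symm.pairwise_on _).2 fun L L' hLL' => Set.disjoint_left.2 fun ν hν hν' => ?_
  obtain ⟨j, hj, hj0⟩ := hν'.2 L hLL'
  exact hj0 (hν.1 j hj.1)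

theorem add_single_mem_gapWords {k n L c : ℕ} {ν : ℕ →₀ ℕ} (hν : ν ∈ gapWords k L)
    (hL : L ∈ Ico (n + 1 - k) (n + 1)) : ν + Finsupp.single n (c + 1) ∈ gapWords k (n + 1) := by
  rw [mem_Ico] at hL
  refine ⟨fun j hj => ?_, fun s hs => ?_⟩
  · rw [Finsupp.add_apply, hν.1 j (by omega), Finsupp.single_eq_of_ne (by omega), add_zero]
  · by_cases hsL : s < L
    · obtain ⟨j, hj, hj0⟩ := hν.2 s hsL
      exact ⟨j, hj, by rw [Finsupp.add_apply]; omega⟩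
    · exact ⟨n, ⟨by omega, by omega⟩, by simp⟩

theorem exists_least_forall_ge_eq_zero {M : Type*} [Zero M] {μ : ℕ → M}
    (hμ : ∃ L, ∀ j ≥ L, μ j = 0) :
    ∃ L, (∀ j ≥ L, μ j = 0) ∧ ∀ L' < L, ∃ j ≥ L', μ j ≠ 0 := by
  classical
  exact ⟨Nat.find hμ, Nat.find_spec hμ, fun L' hL' => by simpa using Nat.find_min hμ hL'⟩

theorem exists_add_single_eq_of_mem_gapWords {k n : ℕ} {ν : ℕ →₀ ℕ} (hν : ν ∈ gapWords k (n + 1)) :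
    ∃ L ∈ Ico (n + 1 - k) (n + 1), ∃ μ ∈ gapWords k L, ∃ c, μ + Finsupp.single n (c + 1) = ν := by
  obtain ⟨hzero, hwin⟩ := hν
  have hn : ν n ≠ 0 := by
    obtain ⟨j, hj, hj0⟩ := hwin n (by omega)
    have : ¬ n + 1 ≤ j := fun h => hj0 (hzero j h)
    rwa [show n = j by grind]
  set μ := ν.erase n with hμ
  have hμ_ne {j : ℕ} (hj : j ≠ n) : μ j = ν j := Finsupp.erase_ne hj
  have hμ_zero : ∀ j ≥ n, μ j = 0 := fun j hj => by
    rcases hj.eq_or_lt with rfl | hlt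
    · exact Finsupp.erase_same
    · rw [hμ_ne hlt.ne', hzero j hlt]
  obtain ⟨L, hL, hmin⟩ := exists_least_forall_ge_eq_zero ⟨n, hμ_zero⟩
  have hLn : L ≤ n := by
    by_contra! h
    obtain ⟨j, hj, hj0⟩ := hmin n h
    exact hj0 (hμ_zero j hj)
  refine ⟨L, ?_, μ, ⟨hL, fun s hs => ?_⟩, ν n - 1, ?_⟩
  · obtain ⟨j, hj, hj0⟩ := hwin L (by omega)
    obtain rfl : j = n := by
      by_contra h
      exact hj0 (hμ_ne h ▸ hL j hj.1)
    exact mem_Ico.2 ⟨by have := hj.2; omega, by omega⟩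
  · obtain ⟨j, hj, hj0⟩ := hwin s (by omega)
    by_cases hjn : j = n
    · obtain ⟨i, hi, hi0⟩ := hmin (L - 1) (by omega)
      have hiL : i < L := not_le.1 fun h => hi0 (hL i h)
      exact ⟨i, ⟨by omega, by have := hj.2; omega⟩, hi0⟩
    · exact ⟨j, hj, by rwa [hμ_ne hjn]⟩
  · rw [Nat.sub_add_cancel (Nat.one_le_iff_ne_zero.2 hn), hμ, Finsupp.erase_add_single]

/-- Removing the last letter of a word of length `n + 1`, and the zeros before it, leaves an
arbitrary word of length `L ≤ n` with `n - L < k`. -/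
theorem bijective_add_single (k n : ℕ) :
    Function.Bijective fun p : ℕ × (⋃ L ∈ Ico (n + 1 - k) (n + 1), gapWords k L) =>
      (⟨p.2 + Finsupp.single n (p.1 + 1), by
        obtain ⟨L, hL, hν⟩ := Set.mem_iUnion₂.1 p.2.2
        exact add_single_mem_gapWords hν hL⟩ : gapWords k (n + 1)) := by
  constructor
  · rintro ⟨c, ν, hν⟩ ⟨c', ν', hν'⟩ h
    have hzero {μ : ℕ →₀ ℕ} (hμ : μ ∈ ⋃ L ∈ Ico (n + 1 - k) (n + 1), gapWords k L) : μ n = 0 := by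
      obtain ⟨L, hL, hμ⟩ := Set.mem_iUnion₂.1 hμ
      exact hμ.1 n (Nat.lt_succ_iff.1 (mem_Ico.1 hL).2)
    have heq : ν + Finsupp.single n (c + 1) = ν' + Finsupp.single n (c' + 1) :=
      congrArg Subtype.val h
    obtain rfl : c = c' := by
      simpa [hzero hν, hzero hν'] using DFunLike.congr_fun heq n
    obtain rfl := add_right_cancel heq
    rfl
  · rintro ⟨ν, hν⟩
    obtain ⟨L, hL, μ, hμ, c, rfl⟩ := exists_add_single_eq_of_mem_gapWords hν
    exact ⟨(c, ⟨μ, Set.mem_iUnion₂.2 ⟨L, hL, hμ⟩⟩), rfl⟩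

theorem wordWeight_add_single (ν : ℕ →₀ ℕ) (n c : ℕ) :
    wordWeight (ν + Finsupp.single n c) = wordWeight ν + c * (n + 1) := by
  rw [map_add, wordWeight, Finsupp.weight_single, smul_eq_mul]

section WordCoeff

variable {𝕜 : Type*} [NormedField 𝕜]

/-- The generating function of the weights of the words of length `n`. -/
noncomputable def wordCoeff (k : ℕ) (q : 𝕜) (n : ℕ) : 𝕜 := ∑' ν : gapWords k n, q ^ wordWeight ν.1

variable {k : ℕ} {q : 𝕜}

theorem summable_norm_pow_wordWeight_biUnion {s : Finset ℕ}
    (hs : ∀ L ∈ s, Summable fun ν : gapWords k L => ‖q ^ wordWeight ν.1‖) :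
    Summable fun ν : ⋃ L ∈ s, gapWords k L => ‖q ^ wordWeight ν.1‖ :=
  (hasSum_sum_disjoint s (f := fun ν => ‖q ^ wordWeight ν‖)
    ((pairwise_disjoint_gapWords k).set_pairwise _)
    fun L hL => (hs L hL).hasSum).summable

theorem summable_norm_gapWords (hq : ‖q‖ < 1) (n : ℕ) :
    Summable fun ν : gapWords k n => ‖q ^ wordWeight ν.1‖ := by
  induction n using Nat.strong_induction_on with
  | _ n ih =>
  cases n with
  | zero =>
    rw [gapWords_zero]
    exact (hasSum_unique _).summable
  | succ n =>
    have hgeom : Summable fun c : ℕ => ‖q ^ ((c + 1) * (n + 1))‖ := by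
      refine Summable.of_nonneg_of_le (fun _ => norm_nonneg _) (fun c => ?_)
        (summable_geometric_of_lt_one (norm_nonneg q) hq)
      rw [norm_pow]
      exact pow_le_pow_of_le_one (norm_nonneg q) hq.le (by nlinarith)
    have hshort := summable_norm_pow_wordWeight_biUnion (k := k) (q := q)
      (s := Ico (n + 1 - k) (n + 1)) fun L hL => ih L (mem_Ico.1 hL).2
    refine (Equiv.ofBijective _ (bijective_add_single k n)).summable_iff.1 ?_
    refine (hgeom.mul_of_nonneg hshort (fun _ => norm_nonneg _) fun _ => norm_nonneg _).congr
      fun p => ?_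
    rw [Function.comp_apply, Equiv.ofBijective_apply, wordWeight_add_single, pow_add, norm_mul,
      mul_comm]

theorem wordCoeff_zero (k : ℕ) (q : 𝕜) : wordCoeff k q 0 = 1 := by
  rw [wordCoeff, gapWords_zero, tsum_singleton (0 : ℕ →₀ ℕ) (fun ν => q ^ wordWeight ν), map_zero,
    pow_zero]

theorem wordCoeff_succ [CompleteSpace 𝕜] (hq : ‖q‖ < 1) (n : ℕ) :
    wordCoeff k q (n + 1) =
      q ^ (n + 1) / (1 - q ^ (n + 1)) * ∑ L ∈ Ico (n + 1 - k) (n + 1), wordCoeff k q L := by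
  have hqn : ‖q ^ (n + 1)‖ < 1 := by
    rw [norm_pow]
    exact pow_lt_one₀ (norm_nonneg q) hq n.succ_ne_zero
  have hgeom : HasSum (fun c : ℕ => q ^ ((c + 1) * (n + 1))) (q ^ (n + 1) / (1 - q ^ (n + 1))) := by
    rw [div_eq_mul_inv]
    refine ((hasSum_geometric_of_norm_lt_one hqn).mul_left _).congr_fun fun c => ?_
    rw [← pow_succ', ← pow_mul, mul_comm]
  have hgeom_norm : Summable fun c : ℕ => ‖q ^ ((c + 1) * (n + 1))‖ := by
    refine ((summable_norm_geometric_of_norm_lt_one hqn).comp_injective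
      (add_left_injective 1)).congr fun c => ?_
    rw [Function.comp_apply, ← pow_mul, mul_comm]
  have hshort : ∑' ν : ⋃ L ∈ Ico (n + 1 - k) (n + 1), gapWords k L, q ^ wordWeight ν.1 =
      ∑ L ∈ Ico (n + 1 - k) (n + 1), wordCoeff k q L :=
    Summable.tsum_finset_bUnion_disjoint (f := fun ν => q ^ wordWeight ν)
      ((pairwise_disjoint_gapWords k).set_pairwise _)
      fun L _ => (summable_norm_gapWords hq L).of_norm
  rw [← hgeom.tsum_eq, ← hshort, tsum_mul_tsum_of_summable_norm hgeom_norm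
    (summable_norm_pow_wordWeight_biUnion fun L _ => summable_norm_gapWords hq L), wordCoeff,
    ← (Equiv.ofBijective _ (bijective_add_single k n)).tsum_eq]
  refine tsum_congr fun p => ?_
  rw [Equiv.ofBijective_apply, wordWeight_add_single, pow_add, mul_comm]

/-- Unlike in `wordCoeff_succ`, the sum on the right includes `wordCoeff k q n`; this is the
coefficientwise form of the functional equation `wordSeries_eq_mul`. -/
theorem wordCoeff_eq_mul_sum_Icc [CompleteSpace 𝕜] (hq : ‖q‖ < 1) (n : ℕ) :
    wordCoeff k q n = q ^ n * ∑ j ∈ Icc (n - k) n, wordCoeff k q j := by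
  cases n with
  | zero => simp
  | succ n =>
    have hqn : 1 - q ^ (n + 1) ≠ 0 := by
      refine sub_ne_zero.2 fun h => (pow_lt_one₀ (norm_nonneg q) hq n.succ_ne_zero).ne ?_
      rw [← norm_pow, ← h, norm_one]
    have hrec := wordCoeff_succ (k := k) hq n
    rw [div_mul_eq_mul_div, eq_div_iff hqn] at hrec
    rw [← sum_Ico_add_eq_sum_Icc (Nat.sub_le _ _), mul_add, ← hrec]
    ring

theorem wordCoeff_nonneg (k : ℕ) {ρ : ℝ} (hρ : 0 ≤ ρ) (n : ℕ) : 0 ≤ wordCoeff k ρ n :=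
  tsum_nonneg fun _ => pow_nonneg hρ _

end WordCoeff

/-! ### The generating function of the words -/

/-- The truncated geometric series `1 + y + ⋯ + y ^ k`. -/
def truncGeom {R : Type*} [Semiring R] (k : ℕ) (y : R) : R := ∑ a ∈ range (k + 1), y ^ a

theorem pow_mul_truncGeom_inv {K : Type*} [Field K] (k : ℕ) {y : K} (hy : y ≠ 0) :
    y ^ k * truncGeom k y⁻¹ = truncGeom k y := by
  rw [truncGeom, truncGeom, ← sum_range_reflect, mul_sum]
  refine sum_congr rfl fun a ha => ?_
  rw [add_tsub_cancel_right, inv_pow, ← pow_sub₀ y hy (Nat.sub_le k a),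
    Nat.sub_sub_self (Nat.lt_succ_iff.1 (mem_range.1 ha))]

theorem hasSum_sum_Icc_mul_pow {R : Type*} [CommSemiring R] [TopologicalSpace R]
    [IsTopologicalSemiring R] {c : ℕ → R} {y S : R} (h : HasSum (fun n => c n * y ^ n) S) (k : ℕ) :
    HasSum (fun n => (∑ j ∈ Icc (n - k) n, c j) * y ^ n) (truncGeom k y * S) := by
  have hshift (a : ℕ) : HasSum (fun n => if a ≤ n then c (n - a) * y ^ n else 0) (y ^ a * S) := by
    refine ((add_left_injective a).hasSum_iff ?_).1 ((h.mul_left (y ^ a)).congr_fun fun n => ?_)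
    · exact fun n hn => if_neg fun ha => hn ⟨n - a, Nat.sub_add_cancel ha⟩
    · simp only [Function.comp_apply, Nat.le_add_left, if_true, Nat.add_sub_cancel]
      ring
  rw [truncGeom, sum_mul]
  refine (hasSum_sum fun a _ => hshift a).congr_fun fun n => ?_
  rw [← sum_filter, sum_mul]
  refine sum_nbij' (n - ·) (n - ·) ?_ ?_ ?_ ?_ fun j hj => ?_
  · intro j hj; simp only [mem_filter, mem_range, mem_Icc] at hj ⊢; omega
  · intro a ha; simp only [mem_filter, mem_range, mem_Icc] at ha ⊢; omega
  · intro j hj; simp only [mem_Icc] at hj; omega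
  · intro a ha; simp only [mem_filter] at ha; omega
  · rw [Nat.sub_sub_self (mem_Icc.1 hj).2]

section WordSeries

variable {𝕜 : Type*} [NormedField 𝕜]

/-- The generating function `∑ wordCoeff k q n * x ^ n`. -/
noncomputable def wordSeries (k : ℕ) (q x : 𝕜) : 𝕜 := ∑' n, wordCoeff k q n * x ^ n

variable [CompleteSpace 𝕜] {k : ℕ} {q : 𝕜}

theorem summable_norm_wordCoeff_mul_pow (k : ℕ) (hq : ‖q‖ < 1) (x : 𝕜) :
    Summable fun n => ‖wordCoeff k q n * x ^ n‖ := by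
  have hc : Tendsto (fun n => ‖q‖ ^ n * (1 + ‖x‖) ^ k) atTop (𝓝 0) := by
    simpa using (tendsto_pow_atTop_nhds_zero_of_lt_one (norm_nonneg q) hq).mul_const _
  refine summable_of_le_mul_sum_Icc (k := k) (fun _ => norm_nonneg _) hc fun n => ?_
  have hpow {j : ℕ} (hj : j ∈ Icc (n - k) n) : ‖x‖ ^ n ≤ (1 + ‖x‖) ^ k * ‖x‖ ^ j := by
    rw [mem_Icc] at hj
    calc ‖x‖ ^ n = ‖x‖ ^ (n - j) * ‖x‖ ^ j := (pow_sub_mul_pow _ hj.2).symm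
      _ ≤ (1 + ‖x‖) ^ k * ‖x‖ ^ j := by
        gcongr
        exact (pow_le_pow_left₀ (norm_nonneg x) (by linarith) _).trans
          (pow_le_pow_right₀ (by linarith [norm_nonneg x]) (by omega))
  calc ‖wordCoeff k q n * x ^ n‖
      ≤ ‖q‖ ^ n * (∑ j ∈ Icc (n - k) n, ‖wordCoeff k q j‖) * ‖x‖ ^ n := by
        rw [wordCoeff_eq_mul_sum_Icc hq, norm_mul, norm_mul, norm_pow, norm_pow]
        gcongr
        exact norm_sum_le _ _
    _ = ‖q‖ ^ n * ∑ j ∈ Icc (n - k) n, ‖wordCoeff k q j‖ * ‖x‖ ^ n := by rw [mul_assoc, sum_mul]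
    _ ≤ ‖q‖ ^ n * ∑ j ∈ Icc (n - k) n, ‖wordCoeff k q j‖ * ((1 + ‖x‖) ^ k * ‖x‖ ^ j) := by
        gcongr with j hj
        exact hpow hj
    _ = ‖q‖ ^ n * (1 + ‖x‖) ^ k * ∑ j ∈ Icc (n - k) n, ‖wordCoeff k q j * x ^ j‖ := by
        rw [mul_assoc, mul_sum _ _ ((1 + ‖x‖) ^ k)]
        simp only [norm_mul, norm_pow, mul_left_comm]

theorem wordSeries_eq_mul (k : ℕ) (hq : ‖q‖ < 1) (x : 𝕜) :
    wordSeries k q x = truncGeom k (q * x) * wordSeries k q (q * x) := by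
  rw [wordSeries, wordSeries, ← (hasSum_sum_Icc_mul_pow
    (summable_norm_wordCoeff_mul_pow k hq (q * x)).of_norm.hasSum k).tsum_eq]
  refine tsum_congr fun n => ?_
  rw [wordCoeff_eq_mul_sum_Icc hq n, mul_pow]
  ring

theorem wordSeries_eq_prod_mul (k : ℕ) (hq : ‖q‖ < 1) (x : 𝕜) (N : ℕ) :
    wordSeries k q x =
      (∏ i ∈ range N, truncGeom k (q ^ (i + 1) * x)) * wordSeries k q (q ^ N * x) := by
  induction N with
  | zero => simp
  | succ N ih =>
    rw [ih, wordSeries_eq_mul k hq (q ^ N * x), prod_range_succ, ← mul_assoc q, ← pow_succ',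
      mul_assoc]

theorem tendsto_wordSeries (k : ℕ) (hq : ‖q‖ < 1) (x : 𝕜) :
    Tendsto (fun N : ℕ => wordSeries k q (q ^ N * x)) atTop (𝓝 1) := by
  have hzero : ∑' n, wordCoeff k q n * 0 ^ n = 1 := by
    rw [tsum_eq_single 0 fun n hn => by rw [zero_pow hn, mul_zero], wordCoeff_zero, pow_zero,
      mul_one]
  rw [← hzero]
  refine tendsto_tsum_of_dominated_convergence (summable_norm_wordCoeff_mul_pow k hq x)
    (fun n => ?_) (Eventually.of_forall fun N n => ?_)
  · have hx : Tendsto (fun N : ℕ => q ^ N * x) atTop (𝓝 0) := by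
      simpa using (tendsto_pow_atTop_nhds_zero_of_norm_lt_one hq).mul_const x
    exact (hx.pow n).const_mul _
  · rw [norm_mul, norm_mul, norm_pow, norm_pow, norm_mul, norm_pow]
    gcongr
    exact mul_le_of_le_one_left (norm_nonneg x) (pow_le_one₀ (norm_nonneg q) hq.le)

theorem multipliable_truncGeom (k : ℕ) (hq : ‖q‖ < 1) (x : 𝕜) :
    Multipliable fun i : ℕ => truncGeom k (q ^ i * x) := by
  simp only [truncGeom, sum_range_succ', pow_zero, add_comm _ (1 : 𝕜)]
  refine multipliable_one_add_of_summable (.of_nonneg_of_le (fun _ => norm_nonneg _) (fun i => ?_)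
    ((summable_geometric_of_lt_one (norm_nonneg q) hq).mul_right (∑ a ∈ range k, ‖x‖ ^ (a + 1))))
  rw [mul_sum]
  refine norm_sum_le_of_le _ fun a _ => ?_
  rw [norm_pow, norm_mul, norm_pow, mul_pow]
  gcongr
  exact pow_le_of_le_one (by positivity) (pow_le_one₀ (norm_nonneg q) hq.le) a.succ_ne_zero

theorem hasProd_truncGeom (k : ℕ) (hq : ‖q‖ < 1) (x : 𝕜) :
    HasProd (fun i : ℕ => truncGeom k (q ^ (i + 1) * x)) (wordSeries k q x) := by
  have hmul : Multipliable fun i : ℕ => truncGeom k (q ^ (i + 1) * x) :=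
    (multipliable_truncGeom k hq (q * x)).congr fun i => by rw [pow_succ, mul_assoc]
  have hlim := hmul.hasProd.tendsto_prod_nat.mul (tendsto_wordSeries k hq x)
  simp only [← wordSeries_eq_prod_mul k hq x, mul_one] at hlim
  exact tendsto_nhds_unique tendsto_const_nhds hlim ▸ hmul.hasProd

/-- The functional equation iterated backwards from `(q * w)⁻¹`; the palindromy of `truncGeom k`
turns each factor at `(q ^ i * w)⁻¹` into one at `q ^ i * w`. -/
theorem prod_pow_mul_wordSeries_inv (k : ℕ) (hq0 : q ≠ 0) (hq : ‖q‖ < 1) {w : 𝕜} (hw : w ≠ 0)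
    (N : ℕ) :
    (∏ i ∈ range N, (q ^ (i + 1) * w) ^ k) * wordSeries k q (q ^ (N + 1) * w)⁻¹ =
      (∏ i ∈ range N, truncGeom k (q ^ (i + 1) * w)) * wordSeries k q (q * w)⁻¹ := by
  induction N with
  | zero => simp
  | succ N ih =>
    have hstep : q * (q ^ (N + 1 + 1) * w)⁻¹ = (q ^ (N + 1) * w)⁻¹ := by
      rw [pow_succ' q (N + 1), mul_assoc, mul_inv q, mul_inv_cancel_left₀ hq0]
    rw [wordSeries_eq_mul k hq, hstep, prod_range_succ, prod_range_succ,
      ← pow_mul_truncGeom_inv k (mul_ne_zero (pow_ne_zero (N + 1) hq0) hw)]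
    linear_combination (q ^ (N + 1) * w) ^ k * truncGeom k (q ^ (N + 1) * w)⁻¹ * ih

end WordSeries

/-! ### States with an eventual ground state -/

/-- The sequence to which all elements of `Hkm k m` are eventually equal. -/
def groundState (k m j : ℕ) : ℕ := if (j + 1) % k = m then 1 else 0

/-- The elements of `Hkm k m` that agree with the ground state from index `k * N + m` on. -/
def statesUpTo (k m N : ℕ) : Set (ℕ → ℕ) :=
  {ω ∈ Hkm k m | ∀ j ≥ k * N + m, ω j = groundState k m j}

/-- The weight `∑ (j + 1) * groundState k m j` of the ground state below index `k * N + m`. -/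
def groundWeight (k m N : ℕ) : ℕ := ∑ j ∈ range (k * N + m), (j + 1) * groundState k m j

/-- The sequence that equals `ν` below index `k * N + m` and the ground state from there on. -/
def appendGround (k m N : ℕ) (ν : ℕ →₀ ℕ) (j : ℕ) : ℕ :=
  if j < k * N + m then ν j else groundState k m j

section States

variable {k m : ℕ}

theorem groundState_mul_add_add (hm : m < k) (N : ℕ) {j : ℕ} (hj : j < k) :
    groundState k m (k * N + m + j) = if j + 1 = k then 1 else 0 := by
  rw [groundState, show k * N + m + j + 1 = m + (j + 1) + k * N by ring, Nat.add_mul_mod_self_left]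
  refine if_congr ?_ rfl rfl
  rcases lt_or_ge (m + (j + 1)) k with h | h
  · rw [Nat.mod_eq_of_lt h]; omega
  · rcases lt_or_ge (m + (j + 1)) (2 * k) with h' | h'
    · rw [Nat.mod_eq_sub_mod h, Nat.mod_eq_of_lt (by omega)]; omega
    · omega

theorem exists_groundState_ne_zero (hm : m < k) (s : ℕ) :
    ∃ j ∈ Set.Ico s (s + k), groundState k m j ≠ 0 := by
  set i := m + k * ((s + k - m) / k) with hi
  have hdiv := Nat.div_add_mod (s + k - m) k
  have hmod := Nat.mod_lt (s + k - m) (by omega : 0 < k)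
  refine ⟨i - 1, ⟨by omega, by omega⟩, ?_⟩
  rw [groundState, Nat.sub_add_cancel (by omega), hi, Nat.add_mul_mod_self_left,
    Nat.mod_eq_of_lt hm, if_pos rfl]
  exact one_ne_zero

theorem two_mul_groundWeight (hm : m < k) (N : ℕ) :
    2 * groundWeight k m N = (N + 1) * (k * N + 2 * m) := by
  induction N with
  | zero =>
    rw [groundWeight, mul_zero, zero_add]
    cases m with
    | zero => simp
    | succ m =>
      have hzero : ∀ j ∈ range m, (j + 1) * groundState k (m + 1) j = 0 := fun j hj => by
        rw [mem_range] at hj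
        rw [groundState, Nat.mod_eq_of_lt (by omega), if_neg (by omega), mul_zero]
      rw [sum_range_succ, sum_eq_zero hzero, groundState, Nat.mod_eq_of_lt hm, if_pos rfl]
      ring
  | succ N ih =>
    obtain ⟨l, rfl⟩ : ∃ l, k = l + 1 := ⟨k - 1, by omega⟩
    have hzero : ∀ j ∈ range l, ((l + 1) * N + m + j + 1) *
        groundState (l + 1) m ((l + 1) * N + m + j) = 0 := fun j hj => by
      rw [mem_range] at hj
      rw [groundState_mul_add_add hm N (by omega), if_neg (by omega), mul_zero]
    rw [groundWeight, show (l + 1) * (N + 1) + m = (l + 1) * N + m + (l + 1) by ring,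
      sum_range_add, ← groundWeight, mul_add, ih, sum_range_succ, sum_eq_zero hzero,
      groundState_mul_add_add hm N l.lt_succ_self, if_pos rfl]
    ring

theorem mem_statesUpTo_iff {N : ℕ} {ω : ℕ → ℕ} :
    ω ∈ statesUpTo k m N ↔ (∀ s, ∃ j ∈ Set.Ico s (s + k), ω j ≠ 0) ∧
      ∀ j ≥ k * N + m, ω j = groundState k m j := by
  refine ⟨fun ⟨⟨hω, _⟩, hground⟩ => ⟨fun s => ?_, hground⟩,
    fun ⟨hω, hground⟩ => ⟨⟨fun ⟨s, hs⟩ => ?_, _, hground⟩, hground⟩⟩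
  · by_contra! h
    exact hω ⟨s, fun j hj => h _ ⟨Nat.le_add_right s j, Nat.add_lt_add_left hj s⟩⟩
  · obtain ⟨j, hj, hj0⟩ := hω s
    obtain ⟨i, rfl⟩ := Nat.exists_eq_add_of_le hj.1
    exact hj0 (hs i (Nat.lt_of_add_lt_add_left hj.2))

theorem appendGround_of_lt {N j : ℕ} (ν : ℕ →₀ ℕ) (hj : j < k * N + m) :
    appendGround k m N ν j = ν j := if_pos hj

theorem appendGround_of_ge {N j : ℕ} (ν : ℕ →₀ ℕ) (hj : j ≥ k * N + m) :
    appendGround k m N ν j = groundState k m j := if_neg (not_lt.2 hj)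

theorem mapsTo_appendGround (hm : m < k) (N : ℕ) :
    Set.MapsTo (appendGround k m N) (gapWords k (k * N + m)) (statesUpTo k m N) := by
  refine fun ν hν => mem_statesUpTo_iff.2 ⟨fun s => ?_, fun j => appendGround_of_ge ν⟩
  rcases lt_or_ge s (k * N + m) with hs | hs
  · obtain ⟨j, hj, hj0⟩ := hν.2 s hs
    exact ⟨j, hj, by rwa [appendGround_of_lt ν (not_le.1 fun h => hj0 (hν.1 j h))]⟩
  · obtain ⟨j, hj, hj0⟩ := exists_groundState_ne_zero hm s
    exact ⟨j, hj, by rwa [appendGround_of_ge ν (hs.trans hj.1)]⟩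

theorem injOn_appendGround (k m N : ℕ) :
    Set.InjOn (appendGround k m N) (gapWords k (k * N + m)) := by
  intro ν hν ν' hν' h
  ext j
  rcases lt_or_ge j (k * N + m) with hj | hj
  · rw [← appendGround_of_lt ν hj, h, appendGround_of_lt ν' hj]
  · rw [hν.1 j hj, hν'.1 j hj]

/-- The ground state starts with `k - 1` zeros at index `k * N + m`, so that a window of length `k`
starting before this index has its non-zero entry before it as well. -/
theorem surjOn_appendGround (hm : m < k) (N : ℕ) :
    Set.SurjOn (appendGround k m N) (gapWords k (k * N + m)) (statesUpTo k m N) := by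
  intro ω hω
  obtain ⟨hwin, hground⟩ := mem_statesUpTo_iff.1 hω
  have hlt {s j : ℕ} (hs : s < k * N + m) (hj : j ∈ Set.Ico s (s + k)) (hj0 : ω j ≠ 0) :
      j < k * N + m := by
    by_contra! h
    obtain ⟨i, rfl⟩ := Nat.exists_eq_add_of_le h
    have := hj.2
    rw [hground _ h, groundState_mul_add_add hm N (by omega), if_neg (by omega)] at hj0
    exact hj0 rfl
  set ν : ℕ →₀ ℕ := Finsupp.onFinset (range (k * N + m))
    (fun j => if j < k * N + m then ω j else 0) (by grind)
  have hν_lt {j : ℕ} (hj : j < k * N + m) : ν j = ω j := if_pos hj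
  refine ⟨ν, ⟨fun j hj => if_neg (not_lt.2 hj), fun s hs => ?_⟩, funext fun j => ?_⟩
  · obtain ⟨j, hj, hj0⟩ := hwin s
    exact ⟨j, hj, by rwa [hν_lt (hlt hs hj hj0)]⟩
  · rcases lt_or_ge j (k * N + m) with hj | hj
    · rw [appendGround_of_lt ν hj, hν_lt hj]
    · rw [appendGround_of_ge ν hj, hground j hj]

theorem bijOn_appendGround (hm : m < k) (N : ℕ) :
    Set.BijOn (appendGround k m N) (gapWords k (k * N + m)) (statesUpTo k m N) :=
  ⟨mapsTo_appendGround hm N, injOn_appendGround k m N, surjOn_appendGround hm N⟩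

theorem Wfun_eq_finsum (k m : ℕ) (ω : ℕ → ℕ) :
    Wfun k m ω = ∑ᶠ j : ℕ, ((j : ℤ) + 1) * ((ω j : ℤ) - groundState k m j) := by
  refine finsum_congr fun j => ?_
  rw [groundState]
  split_ifs <;> simp

theorem Wfun_appendGround {N : ℕ} {ν : ℕ →₀ ℕ} (hν : ν ∈ gapWords k (k * N + m)) :
    Wfun k m (appendGround k m N ν) = (wordWeight ν : ℤ) - groundWeight k m N := by
  have hword : wordWeight ν = ∑ j ∈ range (k * N + m), (j + 1) * ν j := by
    have hsupp : ν.support ⊆ range (k * N + m) := fun j hj =>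
      mem_range.2 (not_le.1 fun h => Finsupp.mem_support_iff.1 hj (hν.1 j h))
    rw [wordWeight, Finsupp.weight_apply, Finsupp.sum_of_support_subset ν hsupp _ (by simp)]
    simp only [smul_eq_mul, mul_comm]
  rw [Wfun_eq_finsum, finsum_eq_sum_of_support_subset (s := range (k * N + m)), hword,
    groundWeight, Nat.cast_sum, Nat.cast_sum, ← sum_sub_distrib]
  · refine sum_congr rfl fun j hj => ?_
    rw [appendGround_of_lt ν (mem_range.1 hj)]
    push_cast
    ring
  · refine Function.support_subset_iff'.2 fun j hj => ?_
    rw [appendGround_of_ge ν (by simpa using hj), sub_self, mul_zero]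

theorem eventually_mem_statesUpTo {ω : ℕ → ℕ} (hm : m < k) (hω : ω ∈ Hkm k m) :
    ∀ᶠ N in atTop, ω ∈ statesUpTo k m N := by
  obtain ⟨N₀, hN₀⟩ := hω.2
  filter_upwards [eventually_ge_atTop N₀] with N hN
  have : N ≤ k * N := Nat.le_mul_of_pos_left N (by omega)
  exact ⟨hω, fun j hj => hN₀ j (by omega)⟩

end States

section StateSums

variable {𝕜 : Type*} [NormedField 𝕜]

/-- The generating function of `Wfun k m` over `Hkm k m`; it extends `Sk` to normed fields. -/
noncomputable def stateSum (k m : ℕ) (q : 𝕜) : 𝕜 := ∑' ω : Hkm k m, q ^ Wfun k m ω.1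

/-- The part of `stateSum` over the states that agree with the ground state from index `k * N + m`
on. -/
noncomputable def partialStateSum (k m : ℕ) (q : 𝕜) (N : ℕ) : 𝕜 :=
  ∑' ω : statesUpTo k m N, q ^ Wfun k m ω.1

variable {k m : ℕ} {q : 𝕜}

theorem pow_Wfun_appendGround (hq0 : q ≠ 0) {N : ℕ} (ν : gapWords k (k * N + m)) :
    q ^ Wfun k m (appendGround k m N ν) = q ^ wordWeight ν.1 / q ^ groundWeight k m N := by
  rw [Wfun_appendGround ν.2, zpow_sub₀ hq0, zpow_natCast, zpow_natCast]

theorem partialStateSum_eq_div (hm : m < k) (hq0 : q ≠ 0) (N : ℕ) :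
    partialStateSum k m q N = wordCoeff k q (k * N + m) / q ^ groundWeight k m N := by
  rw [partialStateSum, ← ((bijOn_appendGround hm N).equiv _).tsum_eq, wordCoeff, ← tsum_div_const]
  exact tsum_congr (pow_Wfun_appendGround hq0)

theorem summable_norm_statesUpTo (hm : m < k) (hq0 : q ≠ 0) (hq : ‖q‖ < 1) (N : ℕ) :
    Summable fun ω : statesUpTo k m N => ‖q ^ Wfun k m ω.1‖ := by
  refine ((bijOn_appendGround hm N).equiv _).summable_iff.1 ?_
  refine ((summable_norm_gapWords hq _).div_const ‖q ^ groundWeight k m N‖).congr fun ν => ?_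
  rw [← norm_div, ← pow_Wfun_appendGround hq0]
  rfl

end StateSums

/-! ### The theta series -/

/-- The general term of the theta series of residue class `m`. -/
def thetaTerm {K : Type*} [DivisionRing K] (k m : ℤ) (q w : K) (ℓ : ℤ) : K :=
  q ^ (k * (ℓ * (ℓ + 1)) / 2 - m * ℓ) * w ^ (k * ℓ - m)

theorem two_mul_mul_mul_succ_div_two (k ℓ : ℤ) :
    2 * (k * (ℓ * (ℓ + 1)) / 2) = k * (ℓ * (ℓ + 1)) :=
  Int.mul_ediv_cancel' ((Int.even_mul_succ_self ℓ).two_dvd.mul_left k)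

theorem thetaTerm_add_one {K : Type*} [Field K] (k m : ℤ) {q w : K} (hq : q ≠ 0) (hw : w ≠ 0)
    (ℓ : ℤ) :
    thetaTerm k m q w (ℓ + 1) = thetaTerm k m q w ℓ * (q ^ (k * (ℓ + 1) - m) * w ^ k) := by
  have hexp : k * ((ℓ + 1) * (ℓ + 1 + 1)) / 2 = k * (ℓ * (ℓ + 1)) / 2 + k * (ℓ + 1) := by
    have h := two_mul_mul_mul_succ_div_two k ℓ
    have h' := two_mul_mul_mul_succ_div_two k (ℓ + 1)
    linarith
  rw [thetaTerm, thetaTerm, hexp, mul_mul_mul_comm, ← zpow_add₀ hq, ← zpow_add₀ hw]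
  congr 2 <;> ring

theorem prod_pow_eq_thetaTerm {K : Type*} [Field K] (k : ℕ) {q w : K} (hq : q ≠ 0) (hw : w ≠ 0)
    (N : ℕ) : ∏ i ∈ range N, (q ^ (i + 1) * w) ^ k = thetaTerm k 0 q w N := by
  induction N with
  | zero => simp [thetaTerm]
  | succ N ih =>
    rw [prod_range_succ, ih, Nat.cast_succ, thetaTerm_add_one _ _ hq hw, mul_pow, ← pow_mul,
      mul_comm _ k, sub_zero, zpow_natCast]
    norm_cast

theorem summable_norm_thetaTerm {𝕜 : Type*} [NormedField 𝕜] {k : ℤ} (hk : 0 < k) (m : ℤ)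
    {q w : 𝕜} (hq0 : q ≠ 0) (hq : ‖q‖ < 1) (hw : w ≠ 0) :
    Summable fun ℓ => ‖thetaTerm k m q w ℓ‖ := by
  have hq0' : 0 < ‖q‖ := norm_pos_iff.2 hq0
  set a := Real.log ‖q‖
  set b := Real.log ‖w‖
  set τ : ℂ := ⟨0, -(k * a) / (2 * Real.pi)⟩
  set z : ℂ := ⟨0, -(a * (k / 2 - m) + k * b) / (2 * Real.pi)⟩
  have hτ : 0 < τ.im :=
    div_pos (neg_pos.2 (mul_neg_of_pos_of_neg (mod_cast hk) (Real.log_neg hq0' hq)))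
      Real.two_pi_pos
  refine (((summable_jacobiTheta₂_term_iff z τ).2 hτ).norm.mul_left (Real.exp (-(m * b)))).congr
    fun ℓ => ?_
  have hexp : ((k * (ℓ * (ℓ + 1)) / 2 : ℤ) : ℝ) = k * (ℓ * (ℓ + 1)) / 2 := by
    have := two_mul_mul_mul_succ_div_two k ℓ
    rw [eq_div_iff two_ne_zero, mul_comm]
    exact_mod_cast this
  rw [norm_jacobiTheta₂_term, ← Real.exp_add, thetaTerm, norm_mul, norm_zpow, norm_zpow,
    ← Real.rpow_intCast, ← Real.rpow_intCast, Real.rpow_def_of_pos hq0',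
    Real.rpow_def_of_pos (norm_pos_iff.2 hw), ← Real.exp_add]
  congr 1
  push_cast
  rw [hexp]
  simp only [τ, z]
  field_simp
  ring

/-- The term of index `k * M + m` on the left side of `prod_pow_mul_wordSeries_inv`. -/
theorem prod_pow_mul_wordCoeff_mul_pow {𝕜 : Type*} [NormedField 𝕜] {k m : ℕ} (hm : m < k) {q w : 𝕜}
    (hq : q ≠ 0) (hw : w ≠ 0) (N M : ℕ) :
    (∏ i ∈ range N, (q ^ (i + 1) * w) ^ k) *
      (wordCoeff k q (k * M + m) * (q ^ (N + 1) * w)⁻¹ ^ (k * M + m)) =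
    partialStateSum k m q M * thetaTerm k m q w (N - M) := by
  have hexp : k * (N * (N + 1)) / 2 - ((N : ℤ) + 1) * (k * M + m) =
      k * ((N - M) * ((N : ℤ) - M + 1)) / 2 - m * (N - M) - groundWeight k m M := by
    have hN := two_mul_mul_mul_succ_div_two k N
    have hNM := two_mul_mul_mul_succ_div_two k (N - M)
    have hM : 2 * (groundWeight k m M : ℤ) = (M + 1) * (k * M + 2 * m) :=
      mod_cast two_mul_groundWeight hm M
    linarith
  have hpow : (q ^ (N + 1) * w)⁻¹ ^ (k * M + m) =
      q ^ (-(((N : ℤ) + 1) * (k * M + m))) * w ^ (-((k : ℤ) * M + m)) := by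
    rw [inv_pow, mul_pow, mul_inv, zpow_neg, zpow_neg, ← pow_mul]
    norm_cast
  rw [prod_pow_eq_thetaTerm k hq hw, partialStateSum_eq_div hm hq, hpow, thetaTerm, thetaTerm]
  have hw_exp : w ^ (k * (N : ℤ) - 0) * w ^ (-((k : ℤ) * M + m)) =
      w ^ (k * ((N : ℤ) - M) - m) := by
    rw [← zpow_add₀ hw]
    congr 1
    ring
  have hq_exp : q ^ (k * (N * (N + 1)) / 2 - 0 * (N : ℤ)) *
      q ^ (-(((N : ℤ) + 1) * (k * M + m))) =
      q ^ (k * ((N - M) * ((N : ℤ) - M + 1)) / 2 - m * (N - M)) / q ^ groundWeight k m M := by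
    rw [← zpow_natCast q (groundWeight k m M), ← zpow_sub₀ hq, ← zpow_add₀ hq, ← hexp]
    congr 1
    ring
  linear_combination wordCoeff k q (k * M + m) * (q ^ (k * (N * (N + 1)) / 2 - 0 * (N : ℤ)) *
    q ^ (-(((N : ℤ) + 1) * (k * M + m))) * hw_exp + w ^ (k * ((N : ℤ) - M) - m) * hq_exp)

/-! ### Convergence of the sum over states and the product formula -/

section ProductFormula

variable {k m : ℕ}

/-- By positivity, `partialStateSum k m ρ N` is at most the left side of
`prod_pow_mul_wordSeries_inv` at `w = 1`, while the right side converges as `N → ∞`. -/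
theorem bddAbove_range_partialStateSum (hm : m < k) {ρ : ℝ} (hρ0 : 0 < ρ) (hρ : ρ < 1) :
    BddAbove (Set.range (partialStateSum k m ρ)) := by
  have hnorm : ‖ρ‖ < 1 := by rwa [Real.norm_of_nonneg hρ0.le]
  obtain ⟨C, hC⟩ := ((hasProd_truncGeom k hnorm 1).tendsto_prod_nat.mul_const
    (wordSeries k ρ (ρ * 1)⁻¹)).bddAbove_range
  refine ⟨C, ?_⟩
  rintro _ ⟨N, rfl⟩
  set x : ℝ := (ρ ^ (N + 1) * 1)⁻¹
  have hterm : wordCoeff k ρ (k * N + m) * x ^ (k * N + m) ≤ wordSeries k ρ x :=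
    (summable_norm_wordCoeff_mul_pow k hnorm x).of_norm.le_tsum _
      fun n _ => mul_nonneg (wordCoeff_nonneg k hρ0.le n) (by positivity)
  calc partialStateSum k m ρ N
      = partialStateSum k m ρ N * thetaTerm k m ρ 1 (N - N) := by simp [thetaTerm]
    _ = (∏ i ∈ range N, (ρ ^ (i + 1) * 1) ^ k) *
          (wordCoeff k ρ (k * N + m) * x ^ (k * N + m)) :=
        (prod_pow_mul_wordCoeff_mul_pow hm hρ0.ne' one_ne_zero N N).symm
    _ ≤ (∏ i ∈ range N, (ρ ^ (i + 1) * 1) ^ k) * wordSeries k ρ x :=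
        mul_le_mul_of_nonneg_left hterm (by positivity)
    _ = (∏ i ∈ range N, truncGeom k (ρ ^ (i + 1) * 1)) * wordSeries k ρ (ρ * 1)⁻¹ :=
        prod_pow_mul_wordSeries_inv k hρ0.ne' hnorm one_ne_zero N
    _ ≤ C := hC ⟨N, rfl⟩

variable {𝕜 : Type*} [NormedField 𝕜] {q : 𝕜}

theorem summable_norm_pow_Wfun (hm : m < k) (hq0 : q ≠ 0) (hq : ‖q‖ < 1) :
    Summable fun ω : Hkm k m => ‖q ^ Wfun k m ω.1‖ := by
  have hρ0 : 0 < ‖q‖ := norm_pos_iff.2 hq0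
  obtain ⟨C, hC⟩ := bddAbove_range_partialStateSum hm hρ0 hq
  have hC (N : ℕ) : ∑' ω : statesUpTo k m N, ‖q ^ Wfun k m ω.1‖ ≤ C := by
    simp only [norm_zpow]
    exact hC ⟨N, rfl⟩
  exact summable_subtype_of_tsum_le (fun ω => eventually_mem_statesUpTo hm)
    (fun ω => norm_nonneg (q ^ Wfun k m ω)) (summable_norm_statesUpTo hm hq0 hq) hC

variable [CompleteSpace 𝕜]

theorem tendsto_partialStateSum (hm : m < k) (hq0 : q ≠ 0) (hq : ‖q‖ < 1) :
    Tendsto (partialStateSum k m q) atTop (𝓝 (stateSum k m q)) := by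
  have hsub (N : ℕ) : statesUpTo k m N ⊆ Hkm k m := fun _ hω => hω.1
  exact tendsto_tsum_subtype (f := fun ω => q ^ Wfun k m ω) hsub
    (fun _ => eventually_mem_statesUpTo hm) (summable_norm_pow_Wfun hm hq0 hq)

theorem prod_pow_mul_wordSeries_inv_eq_sum (hk : k ≠ 0) (hq0 : q ≠ 0) (hq : ‖q‖ < 1) {w : 𝕜}
    (hw : w ≠ 0) (N : ℕ) :
    (∏ i ∈ range N, (q ^ (i + 1) * w) ^ k) * wordSeries k q (q ^ (N + 1) * w)⁻¹ =
      ∑ j ∈ range k, ∑' M : ℕ, partialStateSum k j q M * thetaTerm k j q w (N - M) := by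
  obtain ⟨l, rfl⟩ := Nat.exists_eq_succ_of_ne_zero hk
  have hsum := (summable_norm_wordCoeff_mul_pow (l + 1) hq (q ^ (N + 1) * w)⁻¹).of_norm
  rw [wordSeries, ← hsum.tsum_mul_left, Nat.sumByResidueClasses (hsum.mul_left _) (l + 1),
    ← Fin.sum_univ_eq_sum_range
      (fun j => ∑' M : ℕ, partialStateSum (l + 1) j q M * thetaTerm (l + 1 : ℕ) j q w (N - M))]
  refine sum_congr rfl fun j _ => tsum_congr fun M => ?_
  rw [add_comm _ ((l + 1) * M)]
  exact prod_pow_mul_wordCoeff_mul_pow j.isLt hq0 hw N M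

/-- The `k`-fold analogue of the Jacobi triple product identity. -/
theorem hasProd_truncGeom_mul_truncGeom (hk : k ≠ 0) (hq0 : q ≠ 0) (hq : ‖q‖ < 1) {w : 𝕜}
    (hw : w ≠ 0) :
    HasProd (fun i : ℕ => truncGeom k (q ^ (i + 1) * w) * truncGeom k (q ^ i * w⁻¹))
      (∑ j ∈ range k, stateSum k j q * ∑' ℓ, thetaTerm k j q w ℓ) := by
  have hshift (i : ℕ) : q ^ (i + 1) * (q * w)⁻¹ = q ^ i * w⁻¹ := by
    rw [pow_succ, mul_inv, mul_assoc, mul_inv_cancel_left₀ hq0]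
  have hprod := hasProd_truncGeom k hq w
  have hprod_inv := hasProd_truncGeom k hq (q * w)⁻¹
  simp only [hshift] at hprod_inv
  have hlim : Tendsto (fun N => (∏ i ∈ range N, (q ^ (i + 1) * w) ^ k) *
      wordSeries k q (q ^ (N + 1) * w)⁻¹) atTop
      (𝓝 (∑ j ∈ range k, stateSum k j q * ∑' ℓ, thetaTerm k j q w ℓ)) := by
    simp only [prod_pow_mul_wordSeries_inv_eq_sum hk hq0 hq hw]
    exact tendsto_finsetSum _ fun j hj => tendsto_tsum_mul_int_sub
      (tendsto_partialStateSum (mem_range.1 hj) hq0 hq)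
      (summable_norm_thetaTerm (by omega) j hq0 hq hw)
  simp only [prod_pow_mul_wordSeries_inv k hq0 hq hw] at hlim
  exact tendsto_nhds_unique (hprod.tendsto_prod_nat.mul_const _) hlim ▸ hprod.mul hprod_inv

end ProductFormula

/-! ### Separating the residue classes by roots of unity -/

theorem thetaTerm_mul_of_pow_eq_one {K : Type*} [Field K] {k : ℕ} {a : K} (ha0 : a ≠ 0)
    (ha : a ^ k = 1) (m : ℤ) (q w : K) (ℓ : ℤ) :
    thetaTerm k m q (a * w) ℓ = a ^ (-m) * thetaTerm k m q w ℓ := by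
  have hpow : a ^ (k * ℓ - m) = a ^ (-m) := by
    rw [sub_eq_add_neg, zpow_add₀ ha0, zpow_mul, zpow_natCast, ha, one_zpow, one_mul]
  rw [thetaTerm, thetaTerm, mul_zpow, hpow, mul_left_comm]

theorem sum_zpow_mul_of_isPrimitiveRoot {K : Type*} [Field K] {k : ℕ} {ζ : K}
    (hζ : IsPrimitiveRoot ζ k) (n : ℤ) :
    ∑ r ∈ range k, ζ ^ ((r : ℤ) * n) = if (k : ℤ) ∣ n then (k : K) else 0 := by
  simp only [mul_comm _ n, zpow_mul, zpow_natCast]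
  split_ifs with h
  · simp [(hζ.zpow_eq_one_iff_dvd n).2 h]
  · have hpow : (ζ ^ n) ^ k = 1 := by
      rw [← zpow_natCast, zpow_comm, zpow_natCast, hζ.pow_eq_one, one_zpow]
    have hgeom := mul_geom_sum (ζ ^ n) k
    rw [hpow, sub_self] at hgeom
    exact (mul_eq_zero.1 hgeom).resolve_left
      (sub_ne_zero.2 fun h1 => h ((hζ.zpow_eq_one_iff_dvd n).1 h1))

theorem sum_zpow_neg_mul_mul_sum {K : Type*} [Field K] {k m : ℕ} {ζ : K}
    (hζ : IsPrimitiveRoot ζ k) (hm : m < k) (c : ℕ → K) :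
    ∑ r ∈ range k, ζ ^ (-(r : ℤ) * m) * ∑ j ∈ range k, ζ ^ ((r : ℤ) * j) * c j = k * c m := by
  have hdvd {j : ℕ} (hj : j < k) : (k : ℤ) ∣ j - m ↔ m = j := by
    rw [← Int.modEq_iff_dvd, Int.natCast_modEq_iff, Nat.ModEq, Nat.mod_eq_of_lt hm,
      Nat.mod_eq_of_lt hj]
  calc ∑ r ∈ range k, ζ ^ (-(r : ℤ) * m) * ∑ j ∈ range k, ζ ^ ((r : ℤ) * j) * c j
      = ∑ j ∈ range k, (∑ r ∈ range k, ζ ^ ((r : ℤ) * (j - m))) * c j := by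
        simp only [mul_sum, sum_mul]
        rw [sum_comm]
        refine sum_congr rfl fun j _ => sum_congr rfl fun r _ => ?_
        rw [mul_sub, sub_eq_neg_add, ← neg_mul, zpow_add₀ (hζ.ne_zero (by omega)), mul_assoc]
    _ = ∑ j ∈ range k, if m = j then k * c j else 0 := by
        refine sum_congr rfl fun j hj => ?_
        rw [sum_zpow_mul_of_isPrimitiveRoot hζ, ite_mul, zero_mul,
          if_congr (hdvd (mem_range.1 hj)) rfl rfl]
    _ = k * c m := by rw [sum_ite_eq, if_pos (mem_range.2 hm)]

theorem truncGeom_pow_mul_zpow_mul {K : Type*} [Field K] (k i : ℕ) (q ζ x : K) (s : ℤ) :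
    truncGeom k (q ^ i * (ζ ^ s * x)) =
      ∑ α ∈ range (k + 1), ζ ^ ((α : ℤ) * s) * q ^ (α * i) * x ^ α := by
  refine sum_congr rfl fun α _ => ?_
  rw [mul_pow, mul_pow, ← pow_mul, mul_comm i, ← zpow_natCast (ζ ^ s), ← zpow_mul, mul_comm s]
  ring

section RootsOfUnity

variable {𝕜 : Type*} [NormedField 𝕜] [CompleteSpace 𝕜] {k : ℕ} {ζ q z : 𝕜}

theorem hasProd_sum_mul_sum_of_pow_eq_one (hk : k ≠ 0) (hζ : ζ ^ k = 1) (hq0 : q ≠ 0)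
    (hq : ‖q‖ < 1) (hz : z ≠ 0) (r : ℤ) :
    HasProd (fun i : ℕ =>
      (∑ α ∈ range (k + 1), ζ ^ (-(α : ℤ) * r) * q ^ (α * (i + 1)) * z ^ α) *
        ∑ α ∈ range (k + 1), ζ ^ ((α : ℤ) * r) * q ^ (α * i) * z⁻¹ ^ α)
      (∑ j ∈ range k, ζ ^ (r * j) * (stateSum k j q * ∑' ℓ, thetaTerm k j q z ℓ)) := by
  have hζ0 : ζ ≠ 0 := (IsUnit.of_pow_eq_one hζ hk).ne_zero
  have ha : (ζ ^ (-r)) ^ k = 1 := by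
    rw [← zpow_natCast, zpow_comm, zpow_natCast, hζ, one_zpow]
  have h := hasProd_truncGeom_mul_truncGeom hk hq0 hq (mul_ne_zero (zpow_ne_zero (-r) hζ0) hz)
  simp only [thetaTerm_mul_of_pow_eq_one (zpow_ne_zero _ hζ0) ha, ← zpow_mul, neg_mul_neg,
    tsum_mul_left, mul_inv, ← zpow_neg, neg_neg, truncGeom_pow_mul_zpow_mul] at h
  simpa only [neg_mul_comm, mul_left_comm (ζ ^ (r * _))] using h

theorem statement2_general {m : ℕ} (hm : m < k) (hζ : IsPrimitiveRoot ζ k) (hq0 : q ≠ 0)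
    (hq : ‖q‖ < 1) (hz : z ≠ 0) :
    (Summable fun ω : Hkm k m => ‖q ^ Wfun k m ω.1‖) ∧
    (Summable fun ℓ => ‖thetaTerm k m q z ℓ‖) ∧
    (∀ r : ℕ, Multipliable fun i : ℕ =>
      (∑ α ∈ range (k + 1), ζ ^ (-(α : ℤ) * r) * q ^ (α * (i + 1)) * z ^ α) *
        ∑ α ∈ range (k + 1), ζ ^ ((α : ℤ) * r) * q ^ (α * i) * z⁻¹ ^ α) ∧
    k * stateSum k m q * ∑' ℓ, thetaTerm k m q z ℓ =
      ∑ r ∈ range k, ζ ^ (-(r : ℤ) * m) *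
        ∏' i : ℕ,
          (∑ α ∈ range (k + 1), ζ ^ (-(α : ℤ) * r) * q ^ (α * (i + 1)) * z ^ α) *
            ∑ α ∈ range (k + 1), ζ ^ ((α : ℤ) * r) * q ^ (α * i) * z⁻¹ ^ α := by
  have hk : k ≠ 0 := by omega
  have hprod (r : ℕ) := hasProd_sum_mul_sum_of_pow_eq_one hk hζ.pow_eq_one hq0 hq hz r
  refine ⟨summable_norm_pow_Wfun hm hq0 hq, summable_norm_thetaTerm (by omega) m hq0 hq hz,
    fun r => (hprod r).multipliable, ?_⟩
  simp only [(hprod _).tprod_eq]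
  rw [sum_zpow_neg_mul_mul_sum hζ hm fun j => stateSum k j q * ∑' ℓ, thetaTerm k j q z ℓ, mul_assoc]

end RootsOfUnity

theorem statement2 (k m : ℕ) (hk : 1 ≤ k) (hm : m ≤ k - 1) (q z : ℝ)
    (hq0 : 0 < q) (hq1 : q < 1) (hz : z ≠ 0) :
    Summable (fun ℓ : ℤ =>
      (q : ℂ) ^ ((k : ℤ) * (ℓ * (ℓ + 1)) / 2 - (m : ℤ) * ℓ) * (z : ℂ) ^ ((k : ℤ) * ℓ - m)) ∧
    (∀ r < k, Multipliable (fun i : ℕ =>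
      (∑ α ∈ Finset.range (k + 1),
        zetaC k ^ (-(α : ℤ) * r) * (q : ℂ) ^ (α * (i + 1)) * (z : ℂ) ^ α) *
      (∑ α ∈ Finset.range (k + 1),
        zetaC k ^ ((α : ℤ) * r) * (q : ℂ) ^ (α * i) * ((z : ℂ)⁻¹) ^ α))) ∧
    (k : ℂ) * (Sk k m q : ℝ) *
        (∑' ℓ : ℤ, (q : ℂ) ^ ((k : ℤ) * (ℓ * (ℓ + 1)) / 2 - (m : ℤ) * ℓ) *
          (z : ℂ) ^ ((k : ℤ) * ℓ - m)) =
      ∑ r ∈ Finset.range k, zetaC k ^ (-(r : ℤ) * m) *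
        ∏' i : ℕ,
          (∑ α ∈ Finset.range (k + 1),
            zetaC k ^ (-(α : ℤ) * r) * (q : ℂ) ^ (α * (i + 1)) * (z : ℂ) ^ α) *
          (∑ α ∈ Finset.range (k + 1),
            zetaC k ^ ((α : ℤ) * r) * (q : ℂ) ^ (α * i) * ((z : ℂ)⁻¹) ^ α) := by
  have hm' : m < k := by omega
  have hq : ‖(q : ℂ)‖ < 1 := by rwa [Complex.norm_real, Real.norm_of_nonneg hq0.le]
  have hSk : ((Sk k m q : ℝ) : ℂ) = stateSum k m (q : ℂ) := by
    simp only [Sk, stateSum, Complex.ofReal_tsum, Complex.ofReal_zpow]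
  obtain ⟨-, hθ, hprod, h⟩ := statement2_general hm' (Complex.isPrimitiveRoot_exp k (by omega))
    (Complex.ofReal_ne_zero.2 hq0.ne') hq (Complex.ofReal_ne_zero.2 hz)
  exact ⟨hθ.of_norm, fun r _ => hprod r, hSk ▸ h⟩
end
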